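/- arXiv:quant-ph/0308088 — 2 statements merged into one kernel-verified Lean document; each statement's English description precedes it below -/
import Mathlib

section
/- Squashed entanglement is additive on tensor products: for any states ρ^{AB} on H_A ⊗ H_B and ρ^{A'B'} on H_{A'} ⊗ H_{B'}, one has E_sq(ρ^{AB} ⊗ ρ^{A'B'}) = E_sq(ρ^{AB}) + E_sq(ρ^{A'B'}), where the tensor product state is regarded as a bipartite state with respect to the cut AA' versus BB'. -/
open Matrix BigOperators Kronecker
open scoped Classical ComplexOrder

noncomputable section

/-- A (quantum) state: positive semidefinite matrix of trace 1. -/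
def IsState {n : Type*} [Fintype n] (ρ : Matrix n n ℂ) : Prop :=
  ρ.PosSemidef ∧ ρ.trace = 1

/-- Von Neumann entropy (base 2), via the eigenvalues of a Hermitian matrix. -/
def vonNeumannEntropy {n : Type*} [Fintype n] (ρ : Matrix n n ℂ) : ℝ :=
  if h : ρ.IsHermitian then ∑ i, -(h.eigenvalues i * Real.logb 2 (h.eigenvalues i)) else 0

/-- Partial trace over the second (right) factor. -/
def ptraceR {A B : Type*} [Fintype A] [Fintype B]
    (ρ : Matrix (A × B) (A × B) ℂ) : Matrix A A ℂ :=
  fun i j => ∑ b, ρ (i, b) (j, b)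

/-- Partial trace over the first (left) factor. -/
def ptraceL {A B : Type*} [Fintype A] [Fintype B]
    (ρ : Matrix (A × B) (A × B) ℂ) : Matrix B B ℂ :=
  fun i j => ∑ a, ρ (a, i) (a, j)

variable {A B E : Type*} [Fintype A] [Fintype B] [Fintype E]

/-- Marginal of a tripartite state on `A × E` (trace out `B`). -/
def margAE (ρ : Matrix (A × B × E) (A × B × E) ℂ) : Matrix (A × E) (A × E) ℂ :=
  fun x y => ∑ b, ρ (x.1, b, x.2) (y.1, b, y.2)

/-- Marginal of a tripartite state on `B × E` (trace out `A`). -/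
def margBE (ρ : Matrix (A × B × E) (A × B × E) ℂ) : Matrix (B × E) (B × E) ℂ :=
  fun x y => ∑ a, ρ (a, x.1, x.2) (a, y.1, y.2)

/-- Marginal of a tripartite state on `E` (trace out `A` and `B`). -/
def margE (ρ : Matrix (A × B × E) (A × B × E) ℂ) : Matrix E E ℂ :=
  fun x y => ∑ a, ∑ b, ρ (a, b, x) (a, b, y)

/-- Marginal of a tripartite state on `A × B` (trace out `E`). -/
def margAB (ρ : Matrix (A × B × E) (A × B × E) ℂ) : Matrix (A × B) (A × B) ℂ :=
  fun x y => ∑ e, ρ (x.1, x.2, e) (y.1, y.2, e)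

/-- Quantum conditional mutual information `I(A;B|E) = S(AE)+S(BE)-S(ABE)-S(E)`. -/
def condMutualInfo (ρ : Matrix (A × B × E) (A × B × E) ℂ) : ℝ :=
  vonNeumannEntropy (margAE ρ) + vonNeumannEntropy (margBE ρ)
    - vonNeumannEntropy ρ - vonNeumannEntropy (margE ρ)

/-- Squashed entanglement: infimum of `(1/2) I(A;B|E)` over all finite-dimensional
extensions of `ρ`. -/
def Esq {A B : Type*} [Fintype A] [Fintype B] (ρ : Matrix (A × B) (A × B) ℂ) : ℝ :=
  sInf { x : ℝ | ∃ (d : ℕ) (ρE : Matrix (A × B × Fin d) (A × B × Fin d) ℂ),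
    IsState ρE ∧ margAB ρE = ρ ∧ x = (1 / 2) * condMutualInfo ρE }

/-- Outer product `|ψ⟩⟨ψ|`. -/
def outer {n : Type*} (ψ : n → ℂ) : Matrix n n ℂ :=
  Matrix.vecMulVec ψ (star ψ)

/-- Trace norm of a Hermitian matrix: sum of the absolute values of its eigenvalues. -/
def traceNorm {n : Type*} [Fintype n] (X : Matrix n n ℂ) : ℝ :=
  if h : X.IsHermitian then ∑ i, |h.eigenvalues i| else 0

/-- Entanglement of formation: infimum of average entanglement entropy over all
finite pure-state ensembles for `ρ`. -/
def EoF {A B : Type*} [Fintype A] [Fintype B] (ρ : Matrix (A × B) (A × B) ℂ) : ℝ :=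
  sInf { x : ℝ | ∃ (n : ℕ) (p : Fin n → ℝ) (ψ : Fin n → A × B → ℂ),
    (∀ k, 0 ≤ p k) ∧ (∑ k, p k) = 1 ∧ (∀ k, ∑ i, ‖ψ k i‖ ^ 2 = 1) ∧
    (∑ k, (p k : ℂ) • outer (ψ k)) = ρ ∧
    x = ∑ k, p k * vonNeumannEntropy (ptraceR (outer (ψ k))) }

/-- The function `η` : `η(x) = -x log₂ x` for `x ≤ 1/4`, `1/2` otherwise. -/
def eta (x : ℝ) : ℝ := if x ≤ 1 / 4 then -(x * Real.logb 2 x) else 1 / 2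

/-!
The analytic content is that the relative entropy `D(ρ‖σ) = Tr ρ (log ρ - log σ)` decreases under
partial traces. It is the integral over `t > 0` of `Tr ρ (L_σ + t R_ρ)⁻¹ ρ - Tr ρ / (1 + t)`, where
`L_σ` and `R_ρ` are left multiplication by `σ` and right multiplication by `ρ`. The first term is
the maximum over `X` of an expression linear in `(ρ, σ)`, and for `1 ⊗ X` this expression only
depends on the partial traces of `ρ` and `σ`. Comparing `D(ρ^{AE} ‖ 1 ⊗ ρ^E)` with
`D(ρ^{ABE} ‖ 1 ⊗ ρ^{BE})` gives strong subadditivity `I(A;B|E) ≥ 0`, first for invertible states and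
then by continuity for all of them.

Conditional mutual information adds up on products of extensions of the two factors, whence
`E_sq(ρ ⊗ ρ') ≤ E_sq(ρ) + E_sq(ρ')`. Conversely, for every extension of a state on `AA'BB'`, the
chain rule and strong subadditivity give
`I(AA';BB'|E) = I(A;BB'|E) + I(A';BB'|AE) ≥ I(A;B|E) + I(A';B'|AE)`,
where `E` extends the marginal on `AB` and `AE` extends the marginal on `A'B'`.
-/

section Entropy

variable {m n : Type*} [Fintype m] [Fintype n]

lemma vonNeumannEntropy_eq_sum_roots_charpoly [DecidableEq n] {ρ : Matrix n n ℂ}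
    (hρ : ρ.IsHermitian) :
    vonNeumannEntropy ρ =
      (ρ.charpoly.roots.map fun z => Real.negMulLog z.re).sum / Real.log 2 := by
  -- `vonNeumannEntropy` is built on classical decidability of `n`.
  obtain rfl : ‹DecidableEq n› = fun a b => Classical.propDecidable (a = b) :=
    Subsingleton.elim _ _
  rw [vonNeumannEntropy, dif_pos hρ, hρ.roots_charpoly_eq_eigenvalues, Multiset.map_map,
    ← Finset.sum_eq_multiset_sum, Finset.sum_div]
  refine Finset.sum_congr rfl fun i _ => ?_
  simp only [Function.comp_apply, Complex.coe_algebraMap, Complex.ofReal_re, Real.negMulLog,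
    Real.logb]
  ring

lemma vonNeumannEntropy_submatrix_equiv (e : m ≃ n) (ρ : Matrix n n ℂ) :
    vonNeumannEntropy (ρ.submatrix e e) = vonNeumannEntropy ρ := by
  by_cases hρ : ρ.IsHermitian
  · rw [vonNeumannEntropy_eq_sum_roots_charpoly hρ,
      vonNeumannEntropy_eq_sum_roots_charpoly (hρ.submatrix e), ← charpoly_reindex e.symm ρ]
    rfl
  · rw [vonNeumannEntropy, vonNeumannEntropy, dif_neg hρ,
      dif_neg (mt (isHermitian_submatrix_equiv e).mp hρ)]

lemma vonNeumannEntropy_unitary_mul_diagonal_mul_star [DecidableEq n] (U : unitaryGroup n ℂ)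
    (p : n → ℝ) :
    vonNeumannEntropy (U.1 * diagonal (fun i => (p i : ℂ)) * star U.1) =
      (∑ i, Real.negMulLog (p i)) / Real.log 2 := by
  have hHerm : (U.1 * diagonal (fun i => (p i : ℂ)) * star U.1).IsHermitian :=
    isHermitian_mul_mul_conjTranspose _ <|
      isHermitian_diagonal_of_self_adjoint _ <| funext fun i => Complex.conj_ofReal (p i)
  rw [vonNeumannEntropy_eq_sum_roots_charpoly hHerm, charpoly_mul_comm, ← Matrix.mul_assoc,
    Unitary.star_mul_self_of_mem U.2, Matrix.one_mul, charpoly_diagonal,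
    Polynomial.roots_prod _ _ (Finset.prod_ne_zero_iff.mpr fun i _ => Polynomial.X_sub_C_ne_zero _)]
  simp [Polynomial.roots_X_sub_C, Multiset.bind_singleton]

lemma cfc_eq_eigenvectorUnitary_mul_diagonal_mul_star [DecidableEq n] {ρ : Matrix n n ℂ}
    (hρ : ρ.IsHermitian) (f : ℝ → ℝ) :
    cfc f ρ = hρ.eigenvectorUnitary.1 * diagonal (fun i => (f (hρ.eigenvalues i) : ℂ)) *
      star hρ.eigenvectorUnitary.1 := by
  rw [hρ.cfc_eq, IsHermitian.cfc, Unitary.conjStarAlgAut_apply]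
  rfl

lemma vonNeumannEntropy_cfc [DecidableEq n] {ρ : Matrix n n ℂ} (hρ : ρ.IsHermitian)
    (f : ℝ → ℝ) :
    vonNeumannEntropy (cfc f ρ) =
      (∑ i, Real.negMulLog (f (hρ.eigenvalues i))) / Real.log 2 := by
  rw [cfc_eq_eigenvectorUnitary_mul_diagonal_mul_star hρ,
    vonNeumannEntropy_unitary_mul_diagonal_mul_star]

lemma vonNeumannEntropy_eq_sum_negMulLog_eigenvalues [DecidableEq n] {ρ : Matrix n n ℂ}
    (hρ : ρ.IsHermitian) :
    vonNeumannEntropy ρ = (∑ i, Real.negMulLog (hρ.eigenvalues i)) / Real.log 2 := by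
  simpa only [cfc_id ℝ ρ hρ.isSelfAdjoint, id] using vonNeumannEntropy_cfc hρ id

lemma continuous_vonNeumannEntropy_add_smul_one [DecidableEq n] {ρ : Matrix n n ℂ}
    (hρ : ρ.IsHermitian) :
    Continuous fun c : ℝ => vonNeumannEntropy (ρ + c • (1 : Matrix n n ℂ)) := by
  have hshift (c : ℝ) : ρ + c • (1 : Matrix n n ℂ) = cfc (fun x : ℝ => x + c) ρ := by
    rw [cfc_add_const c (fun x => x) ρ (ha := hρ.isSelfAdjoint), cfc_id' ℝ ρ hρ.isSelfAdjoint,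
      Algebra.algebraMap_eq_smul_one]
  simp only [hshift, vonNeumannEntropy_cfc hρ]
  fun_prop

lemma sum_eigenvalues_eq_trace_re [DecidableEq n] {ρ : Matrix n n ℂ} (hρ : ρ.IsHermitian) :
    ∑ i, hρ.eigenvalues i = ρ.trace.re := by
  simp [hρ.trace_eq_sum_eigenvalues]

lemma vonNeumannEntropy_kronecker {ρ : Matrix m m ℂ} {σ : Matrix n n ℂ} (hρ : ρ.IsHermitian)
    (hσ : σ.IsHermitian) :
    vonNeumannEntropy (ρ ⊗ₖ σ) =
      σ.trace.re * vonNeumannEntropy ρ + ρ.trace.re * vonNeumannEntropy σ := by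
  set U := hρ.eigenvectorUnitary
  set V := hσ.eigenvectorUnitary
  set p := hρ.eigenvalues with hp
  set q := hσ.eigenvalues with hq
  have hdiag : ρ ⊗ₖ σ = (U.1 ⊗ₖ V.1) * diagonal (fun x => ((p x.1 * q x.2 : ℝ) : ℂ)) *
      star (U.1 ⊗ₖ V.1) := by
    refine (congrArg₂ (· ⊗ₖ ·) hρ.spectral_theorem hσ.spectral_theorem).trans ?_
    simp only [Unitary.conjStarAlgAut_apply, mul_kronecker_mul, diagonal_kronecker_diagonal,
      star_eq_conjTranspose, conjTranspose_kronecker, Complex.ofReal_mul]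
    rfl
  rw [hdiag, vonNeumannEntropy_unitary_mul_diagonal_mul_star
      ⟨U.1 ⊗ₖ V.1, kronecker_mem_unitary U.2 V.2⟩,
    vonNeumannEntropy_eq_sum_negMulLog_eigenvalues hρ,
    vonNeumannEntropy_eq_sum_negMulLog_eigenvalues hσ,
    ← sum_eigenvalues_eq_trace_re hρ, ← sum_eigenvalues_eq_trace_re hσ, ← mul_div_assoc,
    ← mul_div_assoc, ← add_div, ← hp, ← hq]
  congr 1
  simp only [Real.negMulLog_mul, Fintype.sum_prod_type, Finset.sum_add_distrib,
    ← Finset.sum_mul, ← Finset.mul_sum]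

end Entropy

section Eigenbases

variable {n : Type*} [Fintype n]

lemma trace_conjTranspose_mul (M N : Matrix n n ℂ) :
    (Mᴴ * N).trace = ∑ j, ∑ i, star (M j i) * N j i := by
  rw [trace, Finset.sum_comm]
  simp [mul_apply]

variable [DecidableEq n] {ρ σ : Matrix n n ℂ}

/-- The matrix of the operator `X` with respect to the eigenbasis of `ρ` on the source and the
eigenbasis of `σ` on the target. The entries of `eigenbasisMatrix hρ hσ 1` are the overlaps of the
eigenvectors of `σ` (rows) with those of `ρ` (columns). -/
def eigenbasisMatrix (hρ : ρ.IsHermitian) (hσ : σ.IsHermitian) (X : Matrix n n ℂ) :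
    Matrix n n ℂ :=
  star hσ.eigenvectorUnitary.1 * X * hρ.eigenvectorUnitary.1

lemma eigenbasisMatrix_surjective (hρ : ρ.IsHermitian) (hσ : σ.IsHermitian) :
    Function.Surjective (eigenbasisMatrix hρ hσ) := fun Y => by
  refine ⟨hσ.eigenvectorUnitary.1 * Y * star hρ.eigenvectorUnitary.1, ?_⟩
  rw [eigenbasisMatrix, Matrix.mul_assoc, Matrix.mul_assoc, Matrix.mul_assoc,
    Unitary.star_mul_self_of_mem hρ.eigenvectorUnitary.2, Matrix.mul_one, ← Matrix.mul_assoc,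
    Unitary.star_mul_self_of_mem hσ.eigenvectorUnitary.2, Matrix.one_mul]

lemma trace_conjTranspose_mul_cfc_mul_mul_cfc (hρ : ρ.IsHermitian) (hσ : σ.IsHermitian)
    (X Y : Matrix n n ℂ) (f g : ℝ → ℝ) :
    (Xᴴ * cfc g σ * Y * cfc f ρ).trace =
      ∑ j, ∑ i, star (eigenbasisMatrix hρ hσ X j i) * eigenbasisMatrix hρ hσ Y j i *
        (f (hρ.eigenvalues i) * g (hσ.eigenvalues j) : ℝ) := by
  have hcyc : (Xᴴ * cfc g σ * Y * cfc f ρ).trace =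
      ((eigenbasisMatrix hρ hσ X)ᴴ * (diagonal (fun j => (g (hσ.eigenvalues j) : ℂ)) *
        eigenbasisMatrix hρ hσ Y * diagonal (fun i => (f (hρ.eigenvalues i) : ℂ)))).trace := by
    rw [cfc_eq_eigenvectorUnitary_mul_diagonal_mul_star hρ,
      cfc_eq_eigenvectorUnitary_mul_diagonal_mul_star hσ, ← Matrix.mul_assoc, trace_mul_comm]
    simp only [eigenbasisMatrix, star_eq_conjTranspose, conjTranspose_mul,
      conjTranspose_conjTranspose, Matrix.mul_assoc]
  rw [hcyc, trace_conjTranspose_mul]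
  refine Finset.sum_congr rfl fun j _ => Finset.sum_congr rfl fun i _ => ?_
  rw [mul_diagonal, diagonal_mul]
  push_cast
  ring

lemma trace_cfc_mul_cfc (hρ : ρ.IsHermitian) (hσ : σ.IsHermitian) (f g : ℝ → ℝ) :
    (cfc f ρ * cfc g σ).trace.re = ∑ j, ∑ i, ‖eigenbasisMatrix hρ hσ 1 j i‖ ^ 2 *
      (f (hρ.eigenvalues i) * g (hσ.eigenvalues j)) := by
  have h := trace_conjTranspose_mul_cfc_mul_mul_cfc hρ hσ 1 1 f g
  rw [conjTranspose_one, Matrix.one_mul, Matrix.mul_one, trace_mul_comm] at h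
  simp_rw [h, Complex.star_def, Complex.conj_mul', Complex.re_sum, ← Complex.ofReal_pow,
    ← Complex.ofReal_mul, Complex.ofReal_re]

lemma trace_cfc (hρ : ρ.IsHermitian) (f : ℝ → ℝ) :
    (cfc f ρ).trace = ∑ i, (f (hρ.eigenvalues i) : ℂ) := by
  rw [cfc_eq_eigenvectorUnitary_mul_diagonal_mul_star hρ, trace_mul_comm, ← Matrix.mul_assoc,
    Unitary.star_mul_self_of_mem hρ.eigenvectorUnitary.2, Matrix.one_mul, trace_diagonal]

lemma self_mul_cfc_log (hρ : ρ.IsHermitian) :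
    ρ * cfc Real.log ρ = cfc (fun x => x * Real.log x) ρ := by
  rw [cfc_mul (fun x => x) Real.log ρ (by fun_prop) (ρ.finite_real_spectrum.continuousOn _),
    cfc_id' ℝ ρ hρ.isSelfAdjoint]

lemma vonNeumannEntropy_mul_log_two (hρ : ρ.IsHermitian) :
    vonNeumannEntropy ρ * Real.log 2 = -(ρ * cfc Real.log ρ).trace.re := by
  rw [self_mul_cfc_log hρ, trace_cfc hρ, vonNeumannEntropy_eq_sum_negMulLog_eigenvalues hρ,
    div_mul_cancel₀ _ (Real.log_pos one_lt_two).ne']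
  simp [Real.negMulLog]

end Eigenbases

section RelativeEntropy

variable {n : Type*} [Fintype n] [DecidableEq n] {ρ σ : Matrix n n ℂ}

/-- The quantum relative entropy `D(ρ‖σ) = Tr ρ (log ρ - log σ)`, with natural logarithms. Since
`Real.log 0 = 0`, it is only meaningful when the kernel of `σ` is contained in that of `ρ`. -/
def relativeEntropy (ρ σ : Matrix n n ℂ) : ℝ :=
  (ρ * (cfc Real.log ρ - cfc Real.log σ)).trace.re

lemma relativeEntropy_eq_sum (hρ : ρ.IsHermitian) (hσ : σ.IsHermitian) :
    relativeEntropy ρ σ = ∑ j, ∑ i, ‖eigenbasisMatrix hρ hσ 1 j i‖ ^ 2 *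
      (hρ.eigenvalues i * (Real.log (hρ.eigenvalues i) - Real.log (hσ.eigenvalues j))) := by
  have hself : (ρ * cfc Real.log ρ).trace.re = ∑ j, ∑ i, ‖eigenbasisMatrix hρ hσ 1 j i‖ ^ 2 *
      (hρ.eigenvalues i * Real.log (hρ.eigenvalues i)) := by
    simpa [cfc_const_one ℝ σ hσ.isSelfAdjoint, self_mul_cfc_log hρ] using
      trace_cfc_mul_cfc hρ hσ (fun x => x * Real.log x) (fun _ => 1)
  have hcross : (ρ * cfc Real.log σ).trace.re = ∑ j, ∑ i, ‖eigenbasisMatrix hρ hσ 1 j i‖ ^ 2 *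
      (hρ.eigenvalues i * Real.log (hσ.eigenvalues j)) := by
    simpa only [cfc_id' ℝ ρ hρ.isSelfAdjoint] using
      trace_cfc_mul_cfc hρ hσ (fun x => x) Real.log
  simp only [relativeEntropy, trace_sub, Complex.sub_re, hself, hcross, mul_sub,
    Finset.sum_sub_distrib]

/-- The quadratic form `Tr ρ (L_σ + t R_ρ)⁻¹ ρ`, where `L_σ` and `R_ρ` are left multiplication by
`σ` and right multiplication by `ρ`, computed in the eigenbases of `ρ` and `σ`. -/
def quadraticDivergence (hρ : ρ.IsHermitian) (hσ : σ.IsHermitian) (t : ℝ) : ℝ :=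
  ∑ j, ∑ i, ‖eigenbasisMatrix hρ hσ 1 j i‖ ^ 2 *
    (hρ.eigenvalues i ^ 2 / (hσ.eigenvalues j + t * hρ.eigenvalues i))

lemma quadraticDivergence_sub_eq_sum (hρ : ρ.IsHermitian) (hσ : σ.IsHermitian) (t : ℝ) :
    quadraticDivergence hρ hσ t - ρ.trace.re / (1 + t) =
      ∑ j, ∑ i, ‖eigenbasisMatrix hρ hσ 1 j i‖ ^ 2 *
        (hρ.eigenvalues i ^ 2 / (hσ.eigenvalues j + t * hρ.eigenvalues i) -
          hρ.eigenvalues i / (1 + t)) := by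
  have htrace : ρ.trace.re =
      ∑ j, ∑ i, ‖eigenbasisMatrix hρ hσ 1 j i‖ ^ 2 * hρ.eigenvalues i := by
    simpa [cfc_const_one ℝ σ hσ.isSelfAdjoint, cfc_id' ℝ ρ hρ.isSelfAdjoint] using
      trace_cfc_mul_cfc hρ hσ (fun x => x) (fun _ => 1)
  simp only [quadraticDivergence, htrace, Finset.sum_div, mul_sub, Finset.sum_sub_distrib,
    mul_div_assoc]

/-- The concave functional of `X` whose maximum is `Tr ρ (L_σ + t R_ρ)⁻¹ ρ`. -/
def variationalForm (t : ℝ) (ρ σ X : Matrix n n ℂ) : ℝ :=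
  2 * (Xᴴ * ρ).trace.re - (X * Xᴴ * σ).trace.re - t * (Xᴴ * X * ρ).trace.re

lemma variationalForm_eq_sum (hρ : ρ.IsHermitian) (hσ : σ.IsHermitian) (t : ℝ)
    (X : Matrix n n ℂ) :
    variationalForm t ρ σ X = ∑ j, ∑ i,
      (2 * (star (eigenbasisMatrix hρ hσ X j i) * eigenbasisMatrix hρ hσ 1 j i).re *
          hρ.eigenvalues i -
        (hσ.eigenvalues j + t * hρ.eigenvalues i) * ‖eigenbasisMatrix hρ hσ X j i‖ ^ 2) := by
  have hlin := trace_conjTranspose_mul_cfc_mul_mul_cfc hρ hσ X 1 (fun x => x) (fun _ => 1)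
  have hσsq := trace_conjTranspose_mul_cfc_mul_mul_cfc hρ hσ X X (fun _ => 1) (fun x => x)
  have hρsq := trace_conjTranspose_mul_cfc_mul_mul_cfc hρ hσ X X (fun x => x) (fun _ => 1)
  simp only [cfc_const_one ℝ σ hσ.isSelfAdjoint, cfc_const_one ℝ ρ hρ.isSelfAdjoint,
    cfc_id' ℝ ρ hρ.isSelfAdjoint, cfc_id' ℝ σ hσ.isSelfAdjoint, one_mul, mul_one,
    Complex.star_def, Complex.conj_mul'] at hlin hσsq hρsq
  rw [variationalForm, hlin, ← trace_mul_cycle, hσsq, hρsq]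
  simp only [Complex.re_sum, Complex.re_mul_ofReal, ← Complex.ofReal_pow, Complex.ofReal_re,
    Finset.mul_sum, ← Finset.sum_sub_distrib, Complex.star_def]
  refine Finset.sum_congr rfl fun j _ => Finset.sum_congr rfl fun i _ => ?_
  ring

lemma two_mul_re_star_mul_mul_sub {c : ℝ} (hc : c ≠ 0) (x m : ℂ) (p : ℝ) :
    2 * (star x * m).re * p - c * ‖x‖ ^ 2 =
      ‖m‖ ^ 2 * (p ^ 2 / c) - c * ‖x - (p / c : ℝ) * m‖ ^ 2 := by
  simp only [← Complex.normSq_eq_norm_sq, Complex.normSq_apply, Complex.star_def, Complex.mul_re,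
    Complex.conj_re, Complex.conj_im, Complex.sub_re, Complex.sub_im, Complex.ofReal_re,
    Complex.ofReal_im, Complex.mul_im]
  field_simp
  ring

lemma eigenvalues_add_mul_eigenvalues_pos (hρ : ρ.PosDef) (hσ : σ.PosDef) {t : ℝ} (ht : 0 ≤ t)
    (j i : n) : 0 < hσ.isHermitian.eigenvalues j + t * hρ.isHermitian.eigenvalues i :=
  add_pos_of_pos_of_nonneg (hσ.eigenvalues_pos j) (mul_nonneg ht (hρ.eigenvalues_pos i).le)

lemma variationalForm_eq_quadraticDivergence_sub (hρ : ρ.PosDef) (hσ : σ.PosDef) {t : ℝ}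
    (ht : 0 ≤ t) (X : Matrix n n ℂ) :
    variationalForm t ρ σ X = quadraticDivergence hρ.isHermitian hσ.isHermitian t - ∑ j, ∑ i,
      (hσ.isHermitian.eigenvalues j + t * hρ.isHermitian.eigenvalues i) *
        ‖eigenbasisMatrix hρ.isHermitian hσ.isHermitian X j i -
          (hρ.isHermitian.eigenvalues i /
            (hσ.isHermitian.eigenvalues j + t * hρ.isHermitian.eigenvalues i) : ℝ) *
          eigenbasisMatrix hρ.isHermitian hσ.isHermitian 1 j i‖ ^ 2 := by
  simp_rw [variationalForm_eq_sum hρ.isHermitian hσ.isHermitian, quadraticDivergence,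
    ← Finset.sum_sub_distrib,
    two_mul_re_star_mul_mul_sub (eigenvalues_add_mul_eigenvalues_pos hρ hσ ht _ _).ne']

lemma isGreatest_range_variationalForm (hρ : ρ.PosDef) (hσ : σ.PosDef) {t : ℝ} (ht : 0 ≤ t) :
    IsGreatest (Set.range (variationalForm t ρ σ))
      (quadraticDivergence hρ.isHermitian hσ.isHermitian t) := by
  constructor
  · obtain ⟨X, hX⟩ := eigenbasisMatrix_surjective hρ.isHermitian hσ.isHermitian
      (of fun j i => (hρ.isHermitian.eigenvalues i /
        (hσ.isHermitian.eigenvalues j + t * hρ.isHermitian.eigenvalues i) : ℝ) *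
          eigenbasisMatrix hρ.isHermitian hσ.isHermitian 1 j i)
    refine ⟨X, ?_⟩
    simp [variationalForm_eq_quadraticDivergence_sub hρ hσ ht, hX]
  · rintro _ ⟨X, rfl⟩
    rw [variationalForm_eq_quadraticDivergence_sub hρ hσ ht]
    exact sub_le_self _ <| Finset.sum_nonneg fun j _ => Finset.sum_nonneg fun i _ =>
      mul_nonneg (eigenvalues_add_mul_eigenvalues_pos hρ hσ ht j i).le (sq_nonneg _)

end RelativeEntropy

section Integral

open MeasureTheory Filter Topology

lemma hasDerivAt_mul_log_add_mul_sub_log {p q t : ℝ} (hp : 0 < p) (hq : 0 < q) (ht : 0 ≤ t) :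
    HasDerivAt (fun t => p * (Real.log (q + t * p) - Real.log (1 + t)))
      (p ^ 2 / (q + t * p) - p / (1 + t)) t := by
  have hlog := (((hasDerivAt_id' t).mul_const p).const_add q).log
    (add_pos_of_pos_of_nonneg hq (mul_nonneg ht hp.le)).ne'
  have hlog_one := ((hasDerivAt_id' t).const_add 1).log (by positivity : (1 + t : ℝ) ≠ 0)
  refine ((hlog.sub hlog_one).const_mul p).congr_deriv ?_
  ring

lemma tendsto_mul_log_add_mul_sub_log {p q : ℝ} (hp : 0 < p) :
    Tendsto (fun t => p * (Real.log (q + t * p) - Real.log (1 + t))) atTop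
      (𝓝 (p * Real.log p)) := by
  have hdiv (c : ℝ) : Tendsto (fun t => c / t) atTop (𝓝 0) :=
    tendsto_const_nhds.div_atTop tendsto_id
  have hratio : Tendsto (fun t : ℝ => (q / t + p) / (1 / t + 1)) atTop (𝓝 p) := by
    simpa [Pi.div_def] using ((hdiv q).add_const p).div ((hdiv 1).add_const 1) (by simp)
  refine ((hratio.log hp.ne').const_mul p).congr' ?_
  have hpos : ∀ᶠ t : ℝ in atTop, 0 < q + t * p :=
    (tendsto_atTop_add_const_left _ q (tendsto_id.atTop_mul_const hp)).eventually_gt_atTop 0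
  filter_upwards [eventually_gt_atTop 0, hpos] with t ht htq
  rw [← Real.log_div htq.ne' (by positivity)]
  congr 2
  field_simp

lemma sq_div_sub_div_eq {p q t : ℝ} (hp : 0 < p) (hq : 0 < q) (ht : 0 ≤ t) :
    p ^ 2 / (q + t * p) - p / (1 + t) = p * (p - q) / ((q + t * p) * (1 + t)) := by
  have : 0 < q + t * p := add_pos_of_pos_of_nonneg hq (mul_nonneg ht hp.le)
  field_simp
  ring

lemma integrableOn_Ioi_sq_div_sub_div {p q : ℝ} (hp : 0 < p) (hq : 0 < q) :
    IntegrableOn (fun t => p ^ 2 / (q + t * p) - p / (1 + t)) (Set.Ioi 0) := by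
  have hderiv (t : ℝ) (ht : t ∈ Set.Ici 0) := hasDerivAt_mul_log_add_mul_sub_log hp hq ht
  have hden (t : ℝ) (ht : t ∈ Set.Ioi 0) : 0 ≤ (q + t * p) * (1 + t) := by
    have := Set.mem_Ioi.mp ht
    positivity
  -- The integrand has constant sign, namely that of `p - q`.
  rcases le_total q p with hqp | hpq
  · refine integrableOn_Ioi_deriv_of_nonneg' hderiv (fun t ht => ?_)
      (tendsto_mul_log_add_mul_sub_log hp)
    rw [sq_div_sub_div_eq hp hq (le_of_lt ht)]
    exact div_nonneg (mul_nonneg hp.le (sub_nonneg.mpr hqp)) (hden t ht)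
  · refine integrableOn_Ioi_deriv_of_nonpos' hderiv (fun t ht => ?_)
      (tendsto_mul_log_add_mul_sub_log hp)
    rw [sq_div_sub_div_eq hp hq (le_of_lt ht)]
    exact div_nonpos_of_nonpos_of_nonneg
      (mul_nonpos_of_nonneg_of_nonpos hp.le (sub_nonpos.mpr hpq)) (hden t ht)

lemma integral_Ioi_sq_div_sub_div {p q : ℝ} (hp : 0 < p) (hq : 0 < q) :
    ∫ t in Set.Ioi (0 : ℝ), (p ^ 2 / (q + t * p) - p / (1 + t)) =
      p * (Real.log p - Real.log q) := by
  rw [integral_Ioi_of_hasDerivAt_of_tendsto'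
    (fun t ht => hasDerivAt_mul_log_add_mul_sub_log hp hq ht)
    (integrableOn_Ioi_sq_div_sub_div hp hq) (tendsto_mul_log_add_mul_sub_log hp)]
  simp [mul_sub]

variable {n : Type*} [Fintype n] [DecidableEq n] {ρ σ : Matrix n n ℂ}

lemma integrableOn_quadraticDivergence_sub (hρ : ρ.PosDef) (hσ : σ.PosDef) :
    IntegrableOn (fun t => quadraticDivergence hρ.isHermitian hσ.isHermitian t -
      ρ.trace.re / (1 + t)) (Set.Ioi 0) := by
  simp only [quadraticDivergence_sub_eq_sum]
  exact integrable_finsetSum _ fun j _ => integrable_finsetSum _ fun i _ =>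
    (integrableOn_Ioi_sq_div_sub_div (hρ.eigenvalues_pos i) (hσ.eigenvalues_pos j)).const_mul _

lemma integral_quadraticDivergence_sub (hρ : ρ.PosDef) (hσ : σ.PosDef) :
    ∫ t in Set.Ioi (0 : ℝ), (quadraticDivergence hρ.isHermitian hσ.isHermitian t -
      ρ.trace.re / (1 + t)) = relativeEntropy ρ σ := by
  have hint (j i : n) :=
    (integrableOn_Ioi_sq_div_sub_div (hρ.eigenvalues_pos i) (hσ.eigenvalues_pos j)).const_mul
      (‖eigenbasisMatrix hρ.isHermitian hσ.isHermitian 1 j i‖ ^ 2)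
  simp only [quadraticDivergence_sub_eq_sum, relativeEntropy_eq_sum hρ.isHermitian hσ.isHermitian]
  rw [integral_finsetSum _ fun j _ => integrable_finsetSum _ fun i _ => hint j i]
  refine Finset.sum_congr rfl fun j _ => ?_
  rw [integral_finsetSum _ fun i _ => hint j i]
  refine Finset.sum_congr rfl fun i _ => ?_
  rw [integral_const_mul,
    integral_Ioi_sq_div_sub_div (hρ.eigenvalues_pos i) (hσ.eigenvalues_pos j)]

end Integral

section PartialTrace

open MeasureTheory

variable {m n : Type*} [Fintype m] [Fintype n]

lemma trace_submatrix_equiv (e : m ≃ n) (ρ : Matrix n n ℂ) :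
    (ρ.submatrix e e).trace = ρ.trace :=
  e.sum_comp fun i => ρ i i

lemma trace_ptraceL (ρ : Matrix (m × n) (m × n) ℂ) : (ptraceL ρ).trace = ρ.trace := by
  simp only [trace, diag_apply, ptraceL, Fintype.sum_prod_type_right]

lemma ptraceR_kronecker (ρ : Matrix m m ℂ) (σ : Matrix n n ℂ) :
    ptraceR (ρ ⊗ₖ σ) = σ.trace • ρ := by
  ext x y
  simp [ptraceR, ← Finset.mul_sum, trace, mul_comm]

lemma ptraceL_kronecker (ρ : Matrix m m ℂ) (σ : Matrix n n ℂ) :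
    ptraceL (ρ ⊗ₖ σ) = ρ.trace • σ := by
  ext x y
  simp [ptraceL, ← Finset.sum_mul, trace]

lemma ptraceL_eq_sum_submatrix (ρ : Matrix (m × n) (m × n) ℂ) :
    ptraceL ρ = ∑ a, ρ.submatrix (Prod.mk a) (Prod.mk a) := by
  ext i j
  simp [ptraceL, Matrix.sum_apply]

lemma isHermitian_ptraceL {ρ : Matrix (m × n) (m × n) ℂ} (hρ : ρ.IsHermitian) :
    (ptraceL ρ).IsHermitian := by
  rw [ptraceL_eq_sum_submatrix]
  exact isSelfAdjoint_sum _ fun a _ => (hρ.submatrix _).isSelfAdjoint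

lemma posSemidef_ptraceL {ρ : Matrix (m × n) (m × n) ℂ} (hρ : ρ.PosSemidef) :
    (ptraceL ρ).PosSemidef := by
  rw [ptraceL_eq_sum_submatrix]
  exact posSemidef_sum _ fun a _ => hρ.submatrix _

lemma posDef_ptraceL [Nonempty m] {ρ : Matrix (m × n) (m × n) ℂ} (hρ : ρ.PosDef) :
    (ptraceL ρ).PosDef := by
  rw [ptraceL_eq_sum_submatrix]
  exact posDef_sum Finset.univ_nonempty fun a _ => hρ.submatrix (Prod.mk_right_injective a)

variable [DecidableEq m]

lemma trace_one_kronecker_mul (X : Matrix n n ℂ) (ρ : Matrix (m × n) (m × n) ℂ) :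
    (((1 : Matrix m m ℂ) ⊗ₖ X) * ρ).trace = (X * ptraceL ρ).trace := by
  simp only [trace, diag_apply, mul_apply, ptraceL, kroneckerMap_apply, one_apply,
    Fintype.sum_prod_type_right, Finset.mul_sum, ite_mul, one_mul, zero_mul, Finset.sum_ite_eq,
    Finset.mem_univ, if_true]
  exact Finset.sum_congr rfl fun i _ => Finset.sum_comm

lemma variationalForm_one_kronecker (t : ℝ) (ρ σ : Matrix (m × n) (m × n) ℂ)
    (X : Matrix n n ℂ) :
    variationalForm t ρ σ ((1 : Matrix m m ℂ) ⊗ₖ X) =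
      variationalForm t (ptraceL ρ) (ptraceL σ) X := by
  simp only [variationalForm, conjTranspose_kronecker, conjTranspose_one, ← mul_kronecker_mul,
    Matrix.one_mul, trace_one_kronecker_mul]

variable [DecidableEq n]

lemma quadraticDivergence_ptraceL_le [Nonempty m] {ρ σ : Matrix (m × n) (m × n) ℂ}
    (hρ : ρ.PosDef) (hσ : σ.PosDef) {t : ℝ} (ht : 0 ≤ t) :
    quadraticDivergence (posDef_ptraceL hρ).isHermitian (posDef_ptraceL hσ).isHermitian t ≤
      quadraticDivergence hρ.isHermitian hσ.isHermitian t := by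
  obtain ⟨X, hX⟩ :=
    (isGreatest_range_variationalForm (posDef_ptraceL hρ) (posDef_ptraceL hσ) ht).1
  rw [← hX, ← variationalForm_one_kronecker]
  exact (isGreatest_range_variationalForm hρ hσ ht).2 (Set.mem_range_self _)

lemma relativeEntropy_ptraceL_le [Nonempty m] {ρ σ : Matrix (m × n) (m × n) ℂ}
    (hρ : ρ.PosDef) (hσ : σ.PosDef) :
    relativeEntropy (ptraceL ρ) (ptraceL σ) ≤ relativeEntropy ρ σ := by
  rw [← integral_quadraticDivergence_sub hρ hσ,
    ← integral_quadraticDivergence_sub (posDef_ptraceL hρ) (posDef_ptraceL hσ)]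
  refine setIntegral_mono_on
    (integrableOn_quadraticDivergence_sub (posDef_ptraceL hρ) (posDef_ptraceL hσ))
    (integrableOn_quadraticDivergence_sub hρ hσ) measurableSet_Ioi fun t ht => ?_
  rw [trace_ptraceL]
  exact sub_le_sub_right (quadraticDivergence_ptraceL_le hρ hσ (le_of_lt ht)) _

end PartialTrace

section FunctionalCalculus

variable {m n : Type*} [Fintype m] [Fintype n] [DecidableEq m] [DecidableEq n]

lemma cfc_submatrix_equiv {ρ : Matrix n n ℂ} (hρ : ρ.IsHermitian) (f : ℝ → ℝ) (e : m ≃ n) :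
    cfc f (ρ.submatrix e e) = (cfc f ρ).submatrix e e := by
  let φ : Matrix n n ℂ →⋆ₐ[ℂ] Matrix m m ℂ :=
    { (reindexAlgEquiv ℂ ℂ e.symm).toAlgHom with map_star' := fun _ => rfl }
  exact (StarAlgHomClass.map_cfc φ f ρ (ρ.finite_real_spectrum.continuousOn f)
    (continuous_id.matrix_submatrix e e) hρ.isSelfAdjoint (hρ.submatrix e).isSelfAdjoint).symm

lemma cfc_one_kronecker {σ : Matrix n n ℂ} (hσ : σ.IsHermitian) (f : ℝ → ℝ) :
    cfc f ((1 : Matrix m m ℂ) ⊗ₖ σ) = (1 : Matrix m m ℂ) ⊗ₖ cfc f σ := by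
  let φ : Matrix n n ℂ →⋆ₐ[ℂ] Matrix (m × n) (m × n) ℂ :=
    { toFun := fun X => (1 : Matrix m m ℂ) ⊗ₖ X
      map_one' := one_kronecker_one
      map_mul' := fun X Y => by rw [← mul_kronecker_mul, Matrix.one_mul]
      map_zero' := kronecker_zero _
      map_add' := kronecker_add _
      commutes' := fun c => by
        simp [Algebra.algebraMap_eq_smul_one, kronecker_smul]
      map_star' := fun X => by
        simp [star_eq_conjTranspose, conjTranspose_kronecker] }
  have hφ : Continuous φ := by
    refine continuous_matrix fun x y => ?_
    change Continuous fun X : Matrix n n ℂ => (1 : Matrix m m ℂ) x.1 y.1 * X x.2 y.2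
    fun_prop
  exact (StarAlgHomClass.map_cfc φ f σ (σ.finite_real_spectrum.continuousOn f) hφ
    hσ.isSelfAdjoint (hσ.isSelfAdjoint.map φ)).symm

lemma relativeEntropy_submatrix_equiv {ρ σ : Matrix n n ℂ} (hρ : ρ.IsHermitian)
    (hσ : σ.IsHermitian) (e : m ≃ n) :
    relativeEntropy (ρ.submatrix e e) (σ.submatrix e e) = relativeEntropy ρ σ := by
  have hsub : (cfc Real.log ρ).submatrix e e - (cfc Real.log σ).submatrix e e =
      (cfc Real.log ρ - cfc Real.log σ).submatrix e e := rfl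
  rw [relativeEntropy, cfc_submatrix_equiv hρ, cfc_submatrix_equiv hσ, hsub, submatrix_mul_equiv,
    trace_submatrix_equiv]
  rfl

lemma relativeEntropy_one_kronecker_ptraceL {ρ : Matrix (m × n) (m × n) ℂ}
    (hρ : ρ.IsHermitian) :
    relativeEntropy ρ ((1 : Matrix m m ℂ) ⊗ₖ ptraceL ρ) =
      (vonNeumannEntropy (ptraceL ρ) - vonNeumannEntropy ρ) * Real.log 2 := by
  have hρn := isHermitian_ptraceL hρ
  have hcross : (ρ * ((1 : Matrix m m ℂ) ⊗ₖ cfc Real.log (ptraceL ρ))).trace =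
      (ptraceL ρ * cfc Real.log (ptraceL ρ)).trace := by
    rw [trace_mul_comm, trace_one_kronecker_mul, trace_mul_comm]
  rw [sub_mul, vonNeumannEntropy_mul_log_two hρ, vonNeumannEntropy_mul_log_two hρn,
    relativeEntropy, cfc_one_kronecker hρn, Matrix.mul_sub, trace_sub, hcross, Complex.sub_re]
  ring

end FunctionalCalculus

section StrongSubadditivity

/-- Exchange of the first two of three factors. -/
def prodLeftComm (A B E : Type*) : A × B × E ≃ B × A × E where
  toFun x := (x.2.1, x.1, x.2.2)
  invFun x := (x.2.1, x.1, x.2.2)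

lemma margAE_eq_ptraceL (ω : Matrix (A × B × E) (A × B × E) ℂ) :
    margAE ω = ptraceL (ω.submatrix (prodLeftComm B A E) (prodLeftComm B A E)) :=
  rfl

lemma margBE_eq_ptraceL (ω : Matrix (A × B × E) (A × B × E) ℂ) : margBE ω = ptraceL ω :=
  rfl

lemma margE_eq_ptraceL (ω : Matrix (A × B × E) (A × B × E) ℂ) :
    margE ω = ptraceL (ω.submatrix (Equiv.prodAssoc A B E) (Equiv.prodAssoc A B E)) := by
  ext x y
  simp [margE, ptraceL, Fintype.sum_prod_type]

lemma ptraceL_margAE (ω : Matrix (A × B × E) (A × B × E) ℂ) : ptraceL (margAE ω) = margE ω :=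
  rfl

lemma ptraceL_one_kronecker_margBE [DecidableEq A] (ω : Matrix (A × B × E) (A × B × E) ℂ) :
    ptraceL (((1 : Matrix A A ℂ) ⊗ₖ margBE ω).submatrix (prodLeftComm B A E)
      (prodLeftComm B A E)) = (1 : Matrix A A ℂ) ⊗ₖ margE ω := by
  ext x y
  change ∑ b, (1 : Matrix A A ℂ) x.1 y.1 * ∑ a, ω (a, b, x.2) (a, b, y.2) =
    (1 : Matrix A A ℂ) x.1 y.1 * ∑ a, ∑ b, ω (a, b, x.2) (a, b, y.2)
  rw [← Finset.mul_sum, Finset.sum_comm]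

lemma relativeEntropy_margAE_le [DecidableEq A] [DecidableEq B] [DecidableEq E] [Nonempty A]
    [Nonempty B] {ω : Matrix (A × B × E) (A × B × E) ℂ} (hω : ω.PosDef) :
    relativeEntropy (margAE ω) ((1 : Matrix A A ℂ) ⊗ₖ margE ω) ≤
      relativeEntropy ω ((1 : Matrix A A ℂ) ⊗ₖ margBE ω) := by
  have hprod : ((1 : Matrix A A ℂ) ⊗ₖ margBE ω).PosDef := PosDef.one.kronecker (posDef_ptraceL hω)
  rw [← relativeEntropy_submatrix_equiv hω.isHermitian hprod.isHermitian (prodLeftComm B A E),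
    margAE_eq_ptraceL, ← ptraceL_one_kronecker_margBE]
  exact relativeEntropy_ptraceL_le (hω.submatrix (prodLeftComm B A E).injective)
    (hprod.submatrix (prodLeftComm B A E).injective)

lemma condMutualInfo_nonneg_of_posDef [Nonempty A] [Nonempty B]
    {ω : Matrix (A × B × E) (A × B × E) ℂ} (hω : ω.PosDef) : 0 ≤ condMutualInfo ω := by
  have hAE : (margAE ω).PosDef := posDef_ptraceL (hω.submatrix (prodLeftComm B A E).injective)
  have hle : (vonNeumannEntropy (margE ω) - vonNeumannEntropy (margAE ω)) * Real.log 2 ≤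
      (vonNeumannEntropy (margBE ω) - vonNeumannEntropy ω) * Real.log 2 := by
    have h := relativeEntropy_margAE_le hω
    rwa [margBE_eq_ptraceL, ← ptraceL_margAE,
      relativeEntropy_one_kronecker_ptraceL hAE.isHermitian,
      relativeEntropy_one_kronecker_ptraceL hω.isHermitian] at h
  have := le_of_mul_le_mul_right hle (Real.log_pos one_lt_two)
  rw [condMutualInfo]
  linarith

lemma continuous_vonNeumannEntropy_ptraceL_submatrix_add_smul_one {k m n : Type*} [Finite k]
    [Fintype m] [Fintype n] [DecidableEq k] {ω : Matrix k k ℂ}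
    (hω : ω.PosSemidef) (e : m × n ≃ k) :
    Continuous fun c : ℝ =>
      vonNeumannEntropy (ptraceL ((ω + c • (1 : Matrix k k ℂ)).submatrix e e)) := by
  have hshift (c : ℝ) : ptraceL ((ω + c • (1 : Matrix k k ℂ)).submatrix e e) =
      ptraceL (ω.submatrix e e) + (Fintype.card m * c) • (1 : Matrix n n ℂ) := by
    ext i j
    simp [ptraceL, Finset.sum_add_distrib, one_apply]
  simp only [hshift]
  exact (continuous_vonNeumannEntropy_add_smul_one
    (posSemidef_ptraceL (hω.submatrix e)).isHermitian).comp (continuous_const_mul _)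

lemma continuous_condMutualInfo_add_smul_one [DecidableEq A] [DecidableEq B] [DecidableEq E]
    {ω : Matrix (A × B × E) (A × B × E) ℂ} (hω : ω.PosSemidef) :
    Continuous fun c : ℝ =>
      condMutualInfo (ω + c • (1 : Matrix (A × B × E) (A × B × E) ℂ)) := by
  simp only [condMutualInfo, margAE_eq_ptraceL, margBE_eq_ptraceL, margE_eq_ptraceL]
  have hBE := continuous_vonNeumannEntropy_ptraceL_submatrix_add_smul_one hω (Equiv.refl _)
  exact (((continuous_vonNeumannEntropy_ptraceL_submatrix_add_smul_one hω _).add hBE).sub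
    (continuous_vonNeumannEntropy_add_smul_one hω.isHermitian)).sub
    (continuous_vonNeumannEntropy_ptraceL_submatrix_add_smul_one hω _)

lemma condMutualInfo_nonneg [Nonempty A] [Nonempty B] {ω : Matrix (A × B × E) (A × B × E) ℂ}
    (hω : ω.PosSemidef) : 0 ≤ condMutualInfo ω := by
  have hlim := (continuous_condMutualInfo_add_smul_one hω).continuousWithinAt (s := Set.Ioi 0)
    (x := 0) |>.tendsto
  simp only [zero_smul, add_zero] at hlim
  refine ge_of_tendsto hlim ?_
  filter_upwards [self_mem_nhdsWithin] with c hc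
  exact condMutualInfo_nonneg_of_posDef (PosDef.posSemidef_add hω (PosDef.one.smul hc))

end StrongSubadditivity

section States

variable {m n : Type*} [Fintype m] [Fintype n]

lemma IsState.submatrix_equiv {ρ : Matrix n n ℂ} (hρ : IsState ρ) (e : m ≃ n) :
    IsState (ρ.submatrix e e) :=
  ⟨hρ.1.submatrix e, by rw [trace_submatrix_equiv, hρ.2]⟩

lemma IsState.ptraceL {ρ : Matrix (m × n) (m × n) ℂ} (hρ : IsState ρ) : IsState (ptraceL ρ) :=
  ⟨posSemidef_ptraceL hρ.1, by rw [trace_ptraceL, hρ.2]⟩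

lemma IsState.kronecker {ρ : Matrix m m ℂ} {σ : Matrix n n ℂ} (hρ : IsState ρ) (hσ : IsState σ) :
    IsState (ρ ⊗ₖ σ) :=
  ⟨hρ.1.kronecker hσ.1, by rw [trace_kronecker, hρ.2, hσ.2, one_mul]⟩

lemma IsState.nonempty {ρ : Matrix n n ℂ} (hρ : IsState ρ) : Nonempty n := by
  by_contra hn
  have : IsEmpty n := not_nonempty_iff.mp hn
  simpa [trace] using hρ.2

lemma IsState.vonNeumannEntropy_kronecker {ρ : Matrix m m ℂ} {σ : Matrix n n ℂ}
    (hρ : IsState ρ) (hσ : IsState σ) :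
    vonNeumannEntropy (ρ ⊗ₖ σ) = vonNeumannEntropy ρ + vonNeumannEntropy σ := by
  rw [_root_.vonNeumannEntropy_kronecker hρ.1.isHermitian hσ.1.isHermitian, hρ.2, hσ.2,
    Complex.one_re, one_mul, one_mul]

variable {ω : Matrix (A × B × E) (A × B × E) ℂ}

lemma IsState.margAE (hω : IsState ω) : IsState (margAE ω) :=
  (hω.submatrix_equiv (prodLeftComm B A E)).ptraceL

lemma IsState.margBE (hω : IsState ω) : IsState (margBE ω) :=
  hω.ptraceL

lemma IsState.margE (hω : IsState ω) : IsState (margE ω) :=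
  hω.margAE.ptraceL

lemma IsState.condMutualInfo_nonneg (hω : IsState ω) : 0 ≤ condMutualInfo ω := by
  obtain ⟨a, b, -⟩ := hω.nonempty
  have : Nonempty A := ⟨a⟩
  have : Nonempty B := ⟨b⟩
  exact _root_.condMutualInfo_nonneg hω.1

end States

section ChainRule

variable {A' B' E' : Type*} [Fintype A'] [Fintype B'] [Fintype E']

lemma condMutualInfo_submatrix_prodCongr (ω : Matrix (A × B × E) (A × B × E) ℂ) (eA : A' ≃ A)
    (eB : B' ≃ B) (eE : E' ≃ E) :
    condMutualInfo (ω.submatrix (eA.prodCongr (eB.prodCongr eE))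
      (eA.prodCongr (eB.prodCongr eE))) = condMutualInfo ω := by
  set ω' := ω.submatrix (eA.prodCongr (eB.prodCongr eE)) (eA.prodCongr (eB.prodCongr eE))
  have hAE : margAE ω' = (margAE ω).submatrix (eA.prodCongr eE) (eA.prodCongr eE) := by
    ext x y
    exact eB.sum_comp fun b => ω (eA x.1, b, eE x.2) (eA y.1, b, eE y.2)
  have hBE : margBE ω' = (margBE ω).submatrix (eB.prodCongr eE) (eB.prodCongr eE) := by
    ext x y
    exact eA.sum_comp fun a => ω (a, eB x.1, eE x.2) (a, eB y.1, eE y.2)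
  have hE : margE ω' = (margE ω).submatrix eE eE := by
    rw [← ptraceL_margAE, hAE, ← ptraceL_margAE]
    ext x y
    exact eA.sum_comp fun a => margAE ω (a, eE x) (a, eE y)
  simp only [condMutualInfo, hAE, hBE, hE, ω', vonNeumannEntropy_submatrix_equiv]

lemma condMutualInfo_submatrix_prodLeftComm (ω : Matrix (A × B × E) (A × B × E) ℂ) :
    condMutualInfo (ω.submatrix (prodLeftComm B A E) (prodLeftComm B A E)) =
      condMutualInfo ω := by
  set ω' := ω.submatrix (prodLeftComm B A E) (prodLeftComm B A E)
  have hE : margE ω' = margE ω := by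
    ext x y
    exact Finset.sum_comm
  have hAE : margAE ω' = margBE ω := rfl
  have hBE : margBE ω' = margAE ω := rfl
  simp only [condMutualInfo, hAE, hBE, hE, ω', vonNeumannEntropy_submatrix_equiv]
  ring

/-- The reduced state on `A, B, E` of a state on `AA', B, E`. -/
def discardLeft (ω : Matrix ((A × A') × B × E) ((A × A') × B × E) ℂ) :
    Matrix (A × B × E) (A × B × E) ℂ :=
  fun x y => ∑ a', ω ((x.1, a'), x.2) ((y.1, a'), y.2)

/-- The reduced state on `A, B, E` of a state on `A, BB', E`. -/
def discardRight (ω : Matrix (A × (B × B') × E) (A × (B × B') × E) ℂ) :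
    Matrix (A × B × E) (A × B × E) ℂ :=
  (discardLeft (ω.submatrix (prodLeftComm (B × B') A E) (prodLeftComm (B × B') A E))).submatrix
    (prodLeftComm A B E) (prodLeftComm A B E)

/-- Moves `A` from the left party of a state on `AA', B, E` to the conditioning system `AE`. -/
def prodMoveLeft (A A' B E : Type*) : A' × B × A × E ≃ (A × A') × B × E where
  toFun x := ((x.2.2.1, x.1), x.2.1, x.2.2.2)
  invFun x := (x.1.2, x.2.1, x.1.1, x.2.2)

/-- A state on `AA', B, E` regarded as a state on `A', B, AE`, so that its conditional mutual
information is `I(A';B|AE)`. -/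
def conditionOnLeft (ω : Matrix ((A × A') × B × E) ((A × A') × B × E) ℂ) :
    Matrix (A' × B × A × E) (A' × B × A × E) ℂ :=
  ω.submatrix (prodMoveLeft A A' B E) (prodMoveLeft A A' B E)

lemma IsState.conditionOnLeft {ω : Matrix ((A × A') × B × E) ((A × A') × B × E) ℂ}
    (hω : IsState ω) : IsState (conditionOnLeft ω) :=
  hω.submatrix_equiv _

lemma IsState.discardLeft {ω : Matrix ((A × A') × B × E) ((A × A') × B × E) ℂ}
    (hω : IsState ω) : IsState (discardLeft ω) :=
  hω.conditionOnLeft.ptraceL.submatrix_equiv (prodLeftComm A B E)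

lemma IsState.discardRight {ω : Matrix (A × (B × B') × E) (A × (B × B') × E) ℂ}
    (hω : IsState ω) : IsState (discardRight ω) :=
  (hω.submatrix_equiv _).discardLeft.submatrix_equiv _

lemma condMutualInfo_chain_rule (ω : Matrix ((A × A') × B × E) ((A × A') × B × E) ℂ) :
    condMutualInfo ω = condMutualInfo (discardLeft ω) + condMutualInfo (conditionOnLeft ω) := by
  let eAE : A' × A × E ≃ (A × A') × E := (prodLeftComm A' A E).trans (Equiv.prodAssoc A A' E).symm
  have hAA'E : margAE (conditionOnLeft ω) = (margAE ω).submatrix eAE eAE := rfl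
  have hABE : margBE (conditionOnLeft ω) =
      (discardLeft ω).submatrix (prodLeftComm B A E) (prodLeftComm B A E) := rfl
  have hAE : margE (conditionOnLeft ω) = margAE (discardLeft ω) := by
    ext x y
    exact Finset.sum_comm
  have hBE : margBE (discardLeft ω) = margBE ω := by
    ext x y
    simp only [margBE, Fintype.sum_prod_type]
    rfl
  have hE : margE (discardLeft ω) = margE ω := by
    ext x y
    simp only [margE, Fintype.sum_prod_type]
    exact Finset.sum_congr rfl fun a _ => Finset.sum_comm
  simp only [condMutualInfo, hAA'E, hABE, hAE, hBE, hE, vonNeumannEntropy_submatrix_equiv]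
  rw [conditionOnLeft, vonNeumannEntropy_submatrix_equiv]
  ring

lemma condMutualInfo_discardLeft_le {ω : Matrix ((A × A') × B × E) ((A × A') × B × E) ℂ}
    (hω : IsState ω) : condMutualInfo (discardLeft ω) ≤ condMutualInfo ω := by
  rw [condMutualInfo_chain_rule ω]
  exact le_add_of_nonneg_right hω.conditionOnLeft.condMutualInfo_nonneg

lemma condMutualInfo_discardRight_le {ω : Matrix (A × (B × B') × E) (A × (B × B') × E) ℂ}
    (hω : IsState ω) : condMutualInfo (discardRight ω) ≤ condMutualInfo ω := by
  rw [discardRight, condMutualInfo_submatrix_prodLeftComm,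
    ← condMutualInfo_submatrix_prodLeftComm ω]
  exact condMutualInfo_discardLeft_le (hω.submatrix_equiv _)

end ChainRule

section SquashedEntanglement

variable {A' B' E' : Type*} [Fintype A'] [Fintype B'] [Fintype E']

lemma Esq_le_of_margAB_eq {ρ : Matrix (A × B) (A × B) ℂ} {ω : Matrix (A × B × E) (A × B × E) ℂ}
    (hω : IsState ω) (hρ : margAB ω = ρ) : Esq ρ ≤ 1 / 2 * condMutualInfo ω := by
  let e : A × B × Fin (Fintype.card E) ≃ A × B × E :=
    (Equiv.refl A).prodCongr ((Equiv.refl B).prodCongr (Fintype.equivFin E).symm)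
  refine csInf_le ⟨0, ?_⟩ ⟨Fintype.card E, ω.submatrix e e, hω.submatrix_equiv e, ?_, ?_⟩
  · rintro _ ⟨d, ω', hω', -, rfl⟩
    exact mul_nonneg one_half_pos.le hω'.condMutualInfo_nonneg
  · rw [← hρ]
    ext x y
    exact (Fintype.equivFin E).symm.sum_comp fun k => ω (x.1, x.2, k) (y.1, y.2, k)
  · rw [condMutualInfo_submatrix_prodCongr]

lemma le_Esq {ρ : Matrix (A × B) (A × B) ℂ} (hρ : IsState ρ) {c : ℝ}
    (hc : ∀ (d : ℕ) (ω : Matrix (A × B × Fin d) (A × B × Fin d) ℂ),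
      IsState ω → margAB ω = ρ → c ≤ 1 / 2 * condMutualInfo ω) : c ≤ Esq ρ := by
  let e : A × B × Fin 1 ≃ A × B := (Equiv.refl A).prodCongr (Equiv.prodUnique B (Fin 1))
  refine le_csInf ⟨_, 1, ρ.submatrix e e, hρ.submatrix_equiv e, ?_, rfl⟩ ?_
  · ext x y
    simp [margAB, e]
  · rintro _ ⟨d, ω, hω, hωρ, rfl⟩
    exact hc d ω hω hωρ

/-- Regroups the factors of a tensor product of two tripartite systems party by party. -/
def prodTripleComm (A B E A' B' E' : Type*) :
    (A × A') × (B × B') × E × E' ≃ (A × B × E) × A' × B' × E' :=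
  ((Equiv.refl _).prodCongr (Equiv.prodProdProdComm B B' E E')).trans
    (Equiv.prodProdProdComm A A' (B × E) (B' × E'))

/-- The tensor product of two tripartite states, as a state of the parties `AA', BB', EE'`. -/
def tripartiteKronecker (ω : Matrix (A × B × E) (A × B × E) ℂ)
    (ω' : Matrix (A' × B' × E') (A' × B' × E') ℂ) :
    Matrix ((A × A') × (B × B') × E × E') ((A × A') × (B × B') × E × E') ℂ :=
  (ω ⊗ₖ ω').submatrix (prodTripleComm A B E A' B' E') (prodTripleComm A B E A' B' E')

lemma IsState.tripartiteKronecker {ω : Matrix (A × B × E) (A × B × E) ℂ}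
    {ω' : Matrix (A' × B' × E') (A' × B' × E') ℂ} (hω : IsState ω) (hω' : IsState ω') :
    IsState (tripartiteKronecker ω ω') :=
  (hω.kronecker hω').submatrix_equiv _

lemma condMutualInfo_tripartiteKronecker {ω : Matrix (A × B × E) (A × B × E) ℂ}
    {ω' : Matrix (A' × B' × E') (A' × B' × E') ℂ} (hω : IsState ω) (hω' : IsState ω') :
    condMutualInfo (tripartiteKronecker ω ω') = condMutualInfo ω + condMutualInfo ω' := by
  have hAE : margAE (tripartiteKronecker ω ω') =
      (margAE ω ⊗ₖ margAE ω').submatrix (Equiv.prodProdProdComm A A' E E')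
        (Equiv.prodProdProdComm A A' E E') := by
    ext x y
    simp only [margAE, Fintype.sum_prod_type, submatrix_apply, kroneckerMap_apply,
      Finset.sum_mul_sum]
    rfl
  have hBE : margBE (tripartiteKronecker ω ω') =
      (margBE ω ⊗ₖ margBE ω').submatrix (Equiv.prodProdProdComm B B' E E')
        (Equiv.prodProdProdComm B B' E E') := by
    ext x y
    simp only [margBE, Fintype.sum_prod_type, submatrix_apply, kroneckerMap_apply,
      Finset.sum_mul_sum]
    rfl
  have hE : margE (tripartiteKronecker ω ω') = margE ω ⊗ₖ margE ω' := by
    rw [← ptraceL_margAE, hAE, ← ptraceL_margAE, ← ptraceL_margAE]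
    ext x y
    simp only [ptraceL, Fintype.sum_prod_type, submatrix_apply, kroneckerMap_apply,
      Finset.sum_mul_sum]
    rfl
  rw [condMutualInfo, hAE, hBE, hE, tripartiteKronecker]
  simp only [vonNeumannEntropy_submatrix_equiv]
  rw [hω.margAE.vonNeumannEntropy_kronecker hω'.margAE,
    hω.margBE.vonNeumannEntropy_kronecker hω'.margBE, hω.vonNeumannEntropy_kronecker hω',
    hω.margE.vonNeumannEntropy_kronecker hω'.margE, condMutualInfo, condMutualInfo]
  ring

lemma Esq_kronecker_le {ρ : Matrix (A × B) (A × B) ℂ} {ρ' : Matrix (A' × B') (A' × B') ℂ}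
    (hρ : IsState ρ) (hρ' : IsState ρ') :
    Esq (reindex (Equiv.prodProdProdComm A B A' B') (Equiv.prodProdProdComm A B A' B')
      (ρ ⊗ₖ ρ')) ≤ Esq ρ + Esq ρ' := by
  rw [← sub_le_iff_le_add]
  refine le_Esq hρ fun d ω hω hωρ => ?_
  rw [sub_le_comm]
  refine le_Esq hρ' fun d' ω' hω' hωρ' => ?_
  rw [sub_le_iff_le_add', ← mul_add, ← condMutualInfo_tripartiteKronecker hω hω']
  refine Esq_le_of_margAB_eq (hω.tripartiteKronecker hω') ?_
  rw [← hωρ, ← hωρ']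
  ext x y
  simp only [margAB, Fintype.sum_prod_type, reindex_apply, submatrix_apply, kroneckerMap_apply,
    Finset.sum_mul_sum]
  rfl

lemma margAB_discardRight_discardLeft
    (ω : Matrix ((A × A') × (B × B') × E) ((A × A') × (B × B') × E) ℂ) :
    margAB (discardRight (discardLeft ω)) =
      ptraceR ((margAB ω).submatrix (Equiv.prodProdProdComm A B A' B')
        (Equiv.prodProdProdComm A B A' B')) := by
  ext x y
  simp only [margAB, ptraceR, Fintype.sum_prod_type]
  exact (Finset.sum_congr rfl fun _ _ => Finset.sum_comm).trans
    (Finset.sum_comm.trans (Finset.sum_congr rfl fun _ _ => Finset.sum_comm))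

lemma margAB_discardRight_conditionOnLeft
    (ω : Matrix ((A × A') × (B × B') × E) ((A × A') × (B × B') × E) ℂ) :
    margAB (discardRight ((conditionOnLeft ω).submatrix
        ((Equiv.refl A').prodCongr ((Equiv.prodComm B' B).prodCongr (Equiv.refl (A × E))))
        ((Equiv.refl A').prodCongr ((Equiv.prodComm B' B).prodCongr (Equiv.refl (A × E)))))) =
      ptraceL ((margAB ω).submatrix (Equiv.prodProdProdComm A B A' B')
        (Equiv.prodProdProdComm A B A' B')) := by
  ext x y
  simp only [margAB, ptraceL, Fintype.sum_prod_type]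
  exact Finset.sum_congr rfl fun _ _ => Finset.sum_comm

lemma Esq_ptraceR_add_Esq_ptraceL_le {τ : Matrix ((A × B) × A' × B') ((A × B) × A' × B') ℂ}
    (hτ : IsState τ) :
    Esq (ptraceR τ) + Esq (ptraceL τ) ≤
      Esq (reindex (Equiv.prodProdProdComm A B A' B') (Equiv.prodProdProdComm A B A' B') τ) := by
  refine le_Esq (hτ.submatrix_equiv _) fun d ω hω hωτ => ?_
  let e : A' × (B' × B) × A × Fin d ≃ A' × (B × B') × A × Fin d :=
    (Equiv.refl A').prodCongr ((Equiv.prodComm B' B).prodCongr (Equiv.refl (A × Fin d)))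
  have hν : IsState ((conditionOnLeft ω).submatrix e e) := hω.conditionOnLeft.submatrix_equiv e
  have hAB : margAB (discardRight (discardLeft ω)) = ptraceR τ := by
    rw [margAB_discardRight_discardLeft, hωτ]
    rfl
  have hA'B' : margAB (discardRight ((conditionOnLeft ω).submatrix e e)) = ptraceL τ := by
    rw [margAB_discardRight_conditionOnLeft, hωτ]
    rfl
  calc Esq (ptraceR τ) + Esq (ptraceL τ)
      ≤ 1 / 2 * condMutualInfo (discardRight (discardLeft ω)) +
          1 / 2 * condMutualInfo (discardRight ((conditionOnLeft ω).submatrix e e)) :=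
        add_le_add (Esq_le_of_margAB_eq hω.discardLeft.discardRight hAB)
          (Esq_le_of_margAB_eq hν.discardRight hA'B')
    _ ≤ 1 / 2 * condMutualInfo (discardLeft ω) +
          1 / 2 * condMutualInfo ((conditionOnLeft ω).submatrix e e) := by
        gcongr
        exacts [condMutualInfo_discardRight_le hω.discardLeft, condMutualInfo_discardRight_le hν]
    _ = 1 / 2 * condMutualInfo ω := by
        rw [condMutualInfo_submatrix_prodCongr, condMutualInfo_chain_rule ω, mul_add]

end SquashedEntanglement

/-- Squashed entanglement is additive on tensor products:
`E_sq(ρ^{AB} ⊗ ρ^{A'B'}) = E_sq(ρ^{AB}) + E_sq(ρ^{A'B'})`, where the tensor product is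
regarded as a bipartite state with respect to the cut `AA'` versus `BB'`. -/
theorem squashedEntanglement_additive_tensor
    {A A' B B' : Type*} [Fintype A] [Fintype A'] [Fintype B] [Fintype B']
    (ρ : Matrix (A × B) (A × B) ℂ) (ρ' : Matrix (A' × B') (A' × B') ℂ)
    (hρ : IsState ρ) (hρ' : IsState ρ') :
    Esq (Matrix.reindex (Equiv.prodProdProdComm A B A' B') (Equiv.prodProdProdComm A B A' B')
          (ρ ⊗ₖ ρ'))
      = Esq ρ + Esq ρ' := by
  refine le_antisymm (Esq_kronecker_le hρ hρ') ?_
  have hsuper := Esq_ptraceR_add_Esq_ptraceL_le (hρ.kronecker hρ')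
  rwa [ptraceR_kronecker, ptraceL_kronecker, hρ.2, hρ'.2, one_smul, one_smul] at hsuper

end
end

section
/- Squashed entanglement is upper bounded by entanglement of formation: for every state ρ^{AB} on H_A ⊗ H_B and every finite pure-state ensemble {(p_k, |Ψ_k⟩)} with p_k ≥ 0, ∑_k p_k = 1, |Ψ_k⟩ unit vectors in H_A ⊗ H_B, and ∑_k p_k |Ψ_k⟩⟨Ψ_k| = ρ^{AB}, one has E_sq(ρ^{AB}) ≤ ∑_k p_k S(Tr_B |Ψ_k⟩⟨Ψ_k|). Consequently E_sq(ρ^{AB}) ≤ E_F(ρ^{AB}), the infimum of the right hand side over all such ensembles. -/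
open Matrix BigOperators Kronecker
open scoped Classical ComplexOrder

noncomputable section

variable {A B E : Type*} [Fintype A] [Fintype B] [Fintype E]

/-! Given an ensemble `{(p k, ψ k)}` for `ρ`, attach an orthogonal flag to each member: the
extension `∑ k, p k |ψ k⟩⟨ψ k| ⊗ |k⟩⟨k|`. It is block diagonal in the flag, so conditioning on the
flag averages: `I(A;B|E) = ∑ k, p k I(A;B)_{ψ k}`. Both marginals of a pure state have the same
spectrum, because `K Kᴴ` and `Kᴴ K` agree up to zero eigenvalues, hence `I(A;B)_ψ = 2 S(A)_ψ` and
half of the conditional mutual information is the average entanglement entropy.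

For a genuine infimum the values `I(A;B|E)` must be bounded below uniformly in `E`. Strong
subadditivity would give `0`, but the crude bound `-2 log₂ |A|` is enough. It follows from
`|S(XE) - S(E)| ≤ log₂ |X|`: the upper half is Jensen's inequality in an eigenbasis of the marginal
on `E`, and the lower half is the upper half applied to the complementary marginals of a
purification. -/

/-- The summand `-x log₂ x` of the entropy; it vanishes at `0` because `Real.logb 2 0 = 0`. -/
def negMulLogb (x : ℝ) : ℝ := -(x * Real.logb 2 x)

lemma negMulLogb_eq_negMulLog_div (x : ℝ) : negMulLogb x = Real.negMulLog x / Real.log 2 := by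
  rw [negMulLogb, Real.negMulLog, Real.logb]
  ring

@[simp] lemma negMulLogb_zero : negMulLogb 0 = 0 := by simp [negMulLogb]

@[simp] lemma negMulLogb_one : negMulLogb 1 = 0 := by simp [negMulLogb]

lemma negMulLogb_mul (x y : ℝ) :
    negMulLogb (x * y) = y * negMulLogb x + x * negMulLogb y := by
  simp only [negMulLogb_eq_negMulLog_div, Real.negMulLog_mul]
  ring

lemma concaveOn_negMulLogb : ConcaveOn ℝ (Set.Ici 0) negMulLogb := by
  have h := Real.concaveOn_negMulLog.smul (inv_nonneg.2 (Real.log_nonneg one_le_two))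
  refine h.congr fun x _ => ?_
  exact (inv_mul_eq_div _ _).trans (negMulLogb_eq_negMulLog_div x).symm

lemma sum_negMulLogb_le {ι : Type*} [Fintype ι] {t : ι → ℝ} (ht : ∀ i, 0 ≤ t i) :
    ∑ i, negMulLogb (t i) ≤ negMulLogb (∑ i, t i) + (∑ i, t i) * Real.logb 2 (Fintype.card ι) := by
  rcases isEmpty_or_nonempty ι with _ | _
  · simp
  set N : ℝ := (Fintype.card ι : ℝ) with hN
  have hN0 : 0 < N := by simp [hN, Fintype.card_pos]
  have jensen : ∑ i, N⁻¹ * negMulLogb (t i) ≤ negMulLogb (∑ i, N⁻¹ * t i) :=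
    concaveOn_negMulLogb.le_map_sum (fun _ _ => (inv_pos.2 hN0).le) (by simp [hN])
      (fun i _ => ht i)
  have uniform : negMulLogb N⁻¹ = N⁻¹ * Real.logb 2 N := by
    rw [negMulLogb, Real.logb_inv, mul_neg, neg_neg]
  rw [← Finset.mul_sum, ← Finset.mul_sum, negMulLogb_mul, uniform, inv_mul_le_iff₀ hN0] at jensen
  refine jensen.trans_eq ?_
  field_simp
  ring

section Spectrum

variable {m n : Type*} [Fintype m] [Fintype n]

/-- The entropy of a multiset of eigenvalues given as the roots of a polynomial. Unlike
`Matrix.IsHermitian.eigenvalues`, characteristic polynomials can be compared across index types. -/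
def rootEntropy (P : Polynomial ℂ) : ℝ := (P.roots.map fun z => negMulLogb z.re).sum

lemma rootEntropy_mul {P Q : Polynomial ℂ} (h : P * Q ≠ 0) :
    rootEntropy (P * Q) = rootEntropy P + rootEntropy Q := by
  rw [rootEntropy, Polynomial.roots_mul h, Multiset.map_add, Multiset.sum_add, rootEntropy,
    rootEntropy]

lemma rootEntropy_prod {P : n → Polynomial ℂ} (h : ∀ i, P i ≠ 0) :
    rootEntropy (∏ i, P i) = ∑ i, rootEntropy (P i) := by
  rw [rootEntropy, Polynomial.roots_prod _ _ (Finset.prod_ne_zero_iff.2 fun i _ => h i),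
    Multiset.map_bind, Multiset.sum_bind]
  rfl

lemma rootEntropy_X_pow (k : ℕ) : rootEntropy (Polynomial.X ^ k) = 0 := by
  simp [rootEntropy, Multiset.map_nsmul, Multiset.sum_nsmul]

lemma rootEntropy_prod_X_sub_C (d : n → ℝ) :
    rootEntropy (∏ i, (Polynomial.X - Polynomial.C (d i : ℂ))) = ∑ i, negMulLogb (d i) := by
  rw [rootEntropy_prod fun i => Polynomial.X_sub_C_ne_zero _]
  simp [rootEntropy]

lemma rootEntropy_charpoly_mul_comm [DecidableEq m] [DecidableEq n]
    (M : Matrix m n ℂ) (N : Matrix n m ℂ) :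
    rootEntropy (M * N).charpoly = rootEntropy (N * M).charpoly := by
  have h := congrArg rootEntropy (charpoly_mul_comm' M N)
  rwa [rootEntropy_mul ((Polynomial.monic_X_pow _).mul (charpoly_monic _)).ne_zero,
    rootEntropy_mul ((Polynomial.monic_X_pow _).mul (charpoly_monic _)).ne_zero,
    rootEntropy_X_pow, rootEntropy_X_pow, zero_add, zero_add] at h

lemma charpoly_blockDiagonal [DecidableEq m] [DecidableEq n] (M : n → Matrix m m ℂ) :
    (blockDiagonal M).charpoly = ∏ k, (M k).charpoly := by
  have h : charmatrix (blockDiagonal M) = blockDiagonal fun k => charmatrix (M k) := by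
    ext ⟨i, k⟩ ⟨j, l⟩ : 2
    by_cases hkl : k = l <;> by_cases hij : i = j <;>
      simp [blockDiagonal_apply, hkl, hij]
  simp only [Matrix.charpoly, h, det_blockDiagonal]

end Spectrum

section Entropy

variable {m n : Type*} [Fintype m] [Fintype n] {M : Matrix n n ℂ}

lemma vonNeumannEntropy_eq_sum_eigenvalues [d : DecidableEq n] (hM : M.IsHermitian) :
    vonNeumannEntropy M = ∑ i, negMulLogb (hM.eigenvalues i) := by
  obtain rfl : d = fun _ _ => Classical.propDecidable _ := Subsingleton.elim _ _
  exact dif_pos hM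

lemma vonNeumannEntropy_eq_rootEntropy [DecidableEq n] (hM : M.IsHermitian) :
    vonNeumannEntropy M = rootEntropy M.charpoly := by
  rw [vonNeumannEntropy_eq_sum_eigenvalues hM, hM.charpoly_eq]
  exact (rootEntropy_prod_X_sub_C _).symm

lemma vonNeumannEntropy_diagonal [DecidableEq n] (d : n → ℝ) :
    vonNeumannEntropy (diagonal fun i => (d i : ℂ)) = ∑ i, negMulLogb (d i) := by
  have h : (diagonal fun i => (d i : ℂ)).IsHermitian :=
    isHermitian_diagonal_of_self_adjoint _ (by ext; simp)
  rw [vonNeumannEntropy_eq_rootEntropy h, charpoly_diagonal, rootEntropy_prod_X_sub_C]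

lemma vonNeumannEntropy_transpose (hM : M.IsHermitian) :
    vonNeumannEntropy Mᵀ = vonNeumannEntropy M := by
  rw [vonNeumannEntropy_eq_rootEntropy hM.transpose, vonNeumannEntropy_eq_rootEntropy hM,
    charpoly_transpose]

lemma vonNeumannEntropy_reindex (e : n ≃ m) (hM : M.IsHermitian) :
    vonNeumannEntropy (reindex e e M) = vonNeumannEntropy M := by
  rw [vonNeumannEntropy_eq_rootEntropy (M := reindex e e M) (hM.submatrix _),
    vonNeumannEntropy_eq_rootEntropy hM, charpoly_reindex]

lemma vonNeumannEntropy_mul_conjTranspose_comm (K : Matrix m n ℂ) :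
    vonNeumannEntropy (K * Kᴴ) = vonNeumannEntropy (Kᴴ * K) := by
  rw [vonNeumannEntropy_eq_rootEntropy (isHermitian_mul_conjTranspose_self K),
    vonNeumannEntropy_eq_rootEntropy (isHermitian_conjTranspose_mul_self K),
    rootEntropy_charpoly_mul_comm]

lemma vonNeumannEntropy_conj_unitary [DecidableEq n] (hM : M.IsHermitian) {U : Matrix n n ℂ}
    (hU : U ∈ unitaryGroup n ℂ) : vonNeumannEntropy (Uᴴ * M * U) = vonNeumannEntropy M := by
  rw [vonNeumannEntropy_eq_rootEntropy (isHermitian_conjTranspose_mul_mul _ hM),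
    vonNeumannEntropy_eq_rootEntropy hM, charpoly_mul_comm, ← mul_assoc, ← star_eq_conjTranspose,
    mem_unitaryGroup_iff.1 hU, one_mul]

lemma vonNeumannEntropy_blockDiagonal [DecidableEq m] {N : m → Matrix n n ℂ}
    (hN : ∀ k, (N k).IsHermitian) :
    vonNeumannEntropy (blockDiagonal N) = ∑ k, vonNeumannEntropy (N k) := by
  rw [vonNeumannEntropy_eq_rootEntropy (isHermitian_blockDiagonal_iff.2 hN),
    charpoly_blockDiagonal, rootEntropy_prod fun k => (charpoly_monic _).ne_zero]
  exact Finset.sum_congr rfl fun k _ => (vonNeumannEntropy_eq_rootEntropy (hN k)).symm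

lemma isHermitian_ofReal_smul {n : Type*} {M : Matrix n n ℂ} (hM : M.IsHermitian) (p : ℝ) :
    ((p : ℂ) • M).IsHermitian :=
  hM.smul (Complex.conj_ofReal p)

lemma trace_re_eq_sum_eigenvalues [DecidableEq n] (hM : M.IsHermitian) :
    M.trace.re = ∑ i, hM.eigenvalues i := by
  rw [hM.trace_eq_sum_eigenvalues, Complex.re_sum]
  rfl

lemma vonNeumannEntropy_smul (hM : M.IsHermitian) (p : ℝ) :
    vonNeumannEntropy ((p : ℂ) • M) = p * vonNeumannEntropy M + M.trace.re * negMulLogb p := by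
  have hcfc : cfc (fun x => p * x) M = (p : ℂ) • M :=
    (cfc_const_mul_id p M hM).trans (Complex.coe_smul p M).symm
  have hcharpoly : ((p : ℂ) • M).charpoly =
      ∏ i, (Polynomial.X - Polynomial.C ((p * hM.eigenvalues i : ℝ) : ℂ)) := by
    rw [← hcfc]
    exact hM.charpoly_cfc_eq _
  rw [vonNeumannEntropy_eq_rootEntropy (isHermitian_ofReal_smul hM p), hcharpoly,
    rootEntropy_prod_X_sub_C, vonNeumannEntropy_eq_sum_eigenvalues hM,
    trace_re_eq_sum_eigenvalues hM]
  simp only [negMulLogb_mul, Finset.sum_add_distrib, ← Finset.sum_mul, ← Finset.mul_sum]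
  ring

lemma sum_norm_sq_unitary_row [DecidableEq n] {U : Matrix n n ℂ} (hU : U ∈ unitaryGroup n ℂ)
    (i : n) : ∑ j, ‖U i j‖ ^ 2 = 1 := by
  have h : (U * star U) i i = 1 := by rw [mem_unitaryGroup_iff.1 hU, one_apply_eq]
  apply Complex.ofReal_injective
  simpa [Matrix.mul_apply, star_apply, Complex.mul_conj'] using h

lemma sum_norm_sq_unitary_col [DecidableEq n] {U : Matrix n n ℂ} (hU : U ∈ unitaryGroup n ℂ)
    (j : n) : ∑ i, ‖U i j‖ ^ 2 = 1 := by
  simpa [star_apply] using sum_norm_sq_unitary_row (Unitary.star_mem hU) j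

lemma re_diag_eq_sum_eigenvalues [DecidableEq n] (hM : M.IsHermitian) (i : n) :
    (M i i).re = ∑ k, ‖(hM.eigenvectorUnitary : Matrix n n ℂ) i k‖ ^ 2 * hM.eigenvalues k := by
  set U : Matrix n n ℂ := (hM.eigenvectorUnitary : Matrix n n ℂ) with hU
  have h : M i i = ∑ k, U i k * (hM.eigenvalues k : ℂ) * star (U i k) := by
    conv_lhs => rw [hM.spectral_theorem, Unitary.conjStarAlgAut_apply, Matrix.mul_apply]
    simp [mul_diagonal, star_apply, hU]
  rw [h, Complex.re_sum]
  refine Finset.sum_congr rfl fun k _ => ?_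
  rw [mul_right_comm, ← starRingEnd_apply, Complex.mul_conj', ← Complex.ofReal_pow,
    ← Complex.ofReal_mul, Complex.ofReal_re]

lemma vonNeumannEntropy_le_sum_diag (hM : M.PosSemidef) :
    vonNeumannEntropy M ≤ ∑ i, negMulLogb (M i i).re := by
  set w : n → n → ℝ := fun i k => ‖(hM.isHermitian.eigenvectorUnitary : Matrix n n ℂ) i k‖ ^ 2
  set μ := hM.isHermitian.eigenvalues
  calc vonNeumannEntropy M
      = ∑ k, (∑ i, w i k) * negMulLogb (μ k) := by
        simp only [w, sum_norm_sq_unitary_col (SetLike.coe_mem _), one_mul]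
        exact vonNeumannEntropy_eq_sum_eigenvalues _
    _ = ∑ i, ∑ k, w i k * negMulLogb (μ k) := by
        simp only [Finset.sum_mul]
        exact Finset.sum_comm
    _ ≤ ∑ i, negMulLogb (∑ k, w i k * μ k) := Finset.sum_le_sum fun i _ =>
        concaveOn_negMulLogb.le_map_sum (fun _ _ => sq_nonneg _)
          (sum_norm_sq_unitary_row (SetLike.coe_mem _) i) fun k _ => hM.eigenvalues_nonneg k
    _ = ∑ i, negMulLogb (M i i).re := by
        simp only [re_diag_eq_sum_eigenvalues hM.isHermitian, w, μ]

lemma exists_eq_mul_conjTranspose (hM : M.PosSemidef) : ∃ K : Matrix n n ℂ, M = K * Kᴴ := by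
  open scoped MatrixOrder in
  obtain ⟨K, rfl⟩ := CStarAlgebra.nonneg_iff_eq_star_mul_self.1 hM.nonneg
  exact ⟨Kᴴ, by rw [conjTranspose_conjTranspose, star_eq_conjTranspose]⟩

lemma posSemidef_blockDiagonal {m n : Type*} [Finite m] [DecidableEq m] [Finite n]
    {N : m → Matrix n n ℂ} (hN : ∀ k, (N k).PosSemidef) : (blockDiagonal N).PosSemidef := by
  cases nonempty_fintype m
  cases nonempty_fintype n
  choose K hK using fun k => exists_eq_mul_conjTranspose (hN k)
  rw [funext hK, blockDiagonal_mul, ← blockDiagonal_conjTranspose]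
  exact posSemidef_self_mul_conjTranspose _

end Entropy

section Marginals

variable {X Y : Type*} [Fintype X] [Fintype Y] {M : Matrix (X × Y) (X × Y) ℂ}

lemma ptraceR_eq_sum_submatrix (M : Matrix (X × Y) (X × Y) ℂ) :
    ptraceR M = ∑ y, M.submatrix (·, y) (·, y) := by
  ext i j
  simp [ptraceR, Matrix.sum_apply]

lemma ptraceL_eq_sum_submatrix_s7 (M : Matrix (X × Y) (X × Y) ℂ) :
    ptraceL M = ∑ x, M.submatrix (x, ·) (x, ·) := by
  ext i j
  simp [ptraceL, Matrix.sum_apply]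

lemma ptraceR_smul (c : ℂ) (M : Matrix (X × Y) (X × Y) ℂ) : ptraceR (c • M) = c • ptraceR M := by
  simp only [ptraceR_eq_sum_submatrix, submatrix_smul, Pi.smul_apply, Finset.smul_sum]

lemma ptraceL_smul (c : ℂ) (M : Matrix (X × Y) (X × Y) ℂ) : ptraceL (c • M) = c • ptraceL M := by
  simp only [ptraceL_eq_sum_submatrix_s7, submatrix_smul, Pi.smul_apply, Finset.smul_sum]

lemma trace_ptraceR (M : Matrix (X × Y) (X × Y) ℂ) : (ptraceR M).trace = M.trace :=
  (Fintype.sum_prod_type fun z => M z z).symm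

lemma trace_ptraceL_s7 (M : Matrix (X × Y) (X × Y) ℂ) : (ptraceL M).trace = M.trace :=
  (Fintype.sum_prod_type_right fun z => M z z).symm

lemma posSemidef_ptraceR (hM : M.PosSemidef) : (ptraceR M).PosSemidef := by
  rw [ptraceR_eq_sum_submatrix]
  exact posSemidef_sum _ fun y _ => hM.submatrix _

lemma posSemidef_ptraceL_s7 (hM : M.PosSemidef) : (ptraceL M).PosSemidef := by
  rw [ptraceL_eq_sum_submatrix_s7]
  exact posSemidef_sum _ fun x _ => hM.submatrix _

lemma margAE_eq_sum_submatrix {X Z : Type*} (ρ : Matrix (X × Y × Z) (X × Y × Z) ℂ) :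
    margAE ρ = ∑ y, ρ.submatrix (fun w => (w.1, y, w.2)) fun w => (w.1, y, w.2) := by
  ext i j
  simp [margAE, Matrix.sum_apply]

lemma posSemidef_margAE {X Z : Type*} {ρ : Matrix (X × Y × Z) (X × Y × Z) ℂ}
    (hρ : ρ.PosSemidef) : (margAE ρ).PosSemidef := by
  rw [margAE_eq_sum_submatrix]
  exact posSemidef_sum _ fun y _ => hρ.submatrix _

lemma trace_margAE {Z : Type*} [Fintype Z] (ρ : Matrix (X × Y × Z) (X × Y × Z) ℂ) :
    (margAE ρ).trace = ρ.trace := by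
  simp only [Matrix.trace, diag_apply, margAE, Fintype.sum_prod_type]
  exact Finset.sum_congr rfl fun x _ => Finset.sum_comm

lemma margBE_eq_ptraceL_s7 {Z : Type*} [Fintype Z] (ρ : Matrix (X × Y × Z) (X × Y × Z) ℂ) :
    margBE ρ = ptraceL ρ :=
  rfl

lemma margE_eq_ptraceL_margAE {Z : Type*} [Fintype Z] (ρ : Matrix (X × Y × Z) (X × Y × Z) ℂ) :
    margE ρ = ptraceL (margAE ρ) :=
  rfl

lemma ptraceL_one_kronecker_conj [DecidableEq X] (C D : Matrix Y Y ℂ)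
    (M : Matrix (X × Y) (X × Y) ℂ) :
    ptraceL ((1 ⊗ₖ C) * M * (1 ⊗ₖ D)) = C * ptraceL M * D := by
  rw [ptraceL_eq_sum_submatrix_s7, ptraceL_eq_sum_submatrix_s7, Finset.mul_sum, Finset.sum_mul]
  refine Finset.sum_congr rfl fun x _ => ?_
  ext i j
  simp [Matrix.mul_apply, Fintype.sum_prod_type, one_apply, Finset.sum_mul]

end Marginals

section ConditionalEntropy

variable {X Y : Type*} [Fintype X] [Fintype Y] {M : Matrix (X × Y) (X × Y) ℂ}

lemma vonNeumannEntropy_le_vonNeumannEntropy_ptraceL_add (hM : M.PosSemidef) :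
    vonNeumannEntropy M ≤
      vonNeumannEntropy (ptraceL M) + M.trace.re * Real.logb 2 (Fintype.card X) := by
  have hE := (posSemidef_ptraceL_s7 hM).isHermitian
  set U : Matrix Y Y ℂ := (hE.eigenvectorUnitary : Matrix Y Y ℂ)
  set V : Matrix (X × Y) (X × Y) ℂ := 1 ⊗ₖ U with hV
  have hV_mem : V ∈ unitaryGroup (X × Y) ℂ :=
    kronecker_mem_unitary (one_mem _) (SetLike.coe_mem _)
  have hV_star : Vᴴ = 1 ⊗ₖ Uᴴ := by rw [hV, conjTranspose_kronecker, conjTranspose_one]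
  set N := Vᴴ * M * V with hN
  have hN_psd : N.PosSemidef := hM.conjTranspose_mul_mul_same V
  have hN_diag (y : Y) : ∑ x, (N (x, y) (x, y)).re = hE.eigenvalues y := by
    have h : ptraceL N = diagonal fun y => (hE.eigenvalues y : ℂ) := by
      rw [hN, hV_star, ptraceL_one_kronecker_conj]
      have hdiag := hE.conjStarAlgAut_star_eigenvectorUnitary
      rwa [Unitary.conjStarAlgAut_star_apply] at hdiag
    simpa [ptraceL] using congrArg Complex.re (congrFun₂ h y y)
  calc vonNeumannEntropy M
      = vonNeumannEntropy N := (vonNeumannEntropy_conj_unitary hM.isHermitian hV_mem).symm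
    _ ≤ ∑ z, negMulLogb (N z z).re := vonNeumannEntropy_le_sum_diag hN_psd
    _ = ∑ y, ∑ x, negMulLogb (N (x, y) (x, y)).re := Fintype.sum_prod_type_right _
    _ ≤ ∑ y, (negMulLogb (hE.eigenvalues y)
          + hE.eigenvalues y * Real.logb 2 (Fintype.card X)) := by
        refine Finset.sum_le_sum fun y _ => ?_
        rw [← hN_diag y]
        exact sum_negMulLogb_le fun x => (Complex.nonneg_iff.1 hN_psd.diag_nonneg).1
    _ = vonNeumannEntropy (ptraceL M) + M.trace.re * Real.logb 2 (Fintype.card X) := by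
        rw [Finset.sum_add_distrib, ← Finset.sum_mul, ← trace_re_eq_sum_eigenvalues, trace_ptraceL_s7,
          vonNeumannEntropy_eq_sum_eigenvalues hE]

lemma vonNeumannEntropy_ptraceL_le_vonNeumannEntropy_add (hM : M.PosSemidef) :
    vonNeumannEntropy (ptraceL M) ≤
      vonNeumannEntropy M + M.trace.re * Real.logb 2 (Fintype.card X) := by
  obtain ⟨K, rfl⟩ := exists_eq_mul_conjTranspose hM
  -- The columns of `K` form a purification; `L` is the same tensor split as `Y` against the rest.
  let L : Matrix Y (X × X × Y) ℂ := of fun y z => K (z.1, y) z.2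
  have hL : L * Lᴴ = ptraceL (K * Kᴴ) := by
    ext y y'
    simp only [L, ptraceL, Matrix.mul_apply, conjTranspose_apply, of_apply,
      Fintype.sum_prod_type (α₁ := X) (α₂ := X × Y)]
  have hL_ptraceL : ptraceL (Lᴴ * L) = Kᴴ * K := by
    ext r r'
    simp [L, ptraceL, Matrix.mul_apply, Fintype.sum_prod_type (α₁ := X) (α₂ := Y)]
  have htrace : (Lᴴ * L).trace = (K * Kᴴ).trace := by
    rw [trace_mul_comm, hL, trace_ptraceL_s7]
  have h := vonNeumannEntropy_le_vonNeumannEntropy_ptraceL_add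
    (posSemidef_conjTranspose_mul_self L)
  rwa [← vonNeumannEntropy_mul_conjTranspose_comm, hL, hL_ptraceL,
    ← vonNeumannEntropy_mul_conjTranspose_comm, htrace] at h

lemma neg_two_mul_logb_card_le_condMutualInfo {ρ : Matrix (A × B × E) (A × B × E) ℂ}
    (hρ : IsState ρ) : -2 * Real.logb 2 (Fintype.card A) ≤ condMutualInfo ρ := by
  have hABE : vonNeumannEntropy ρ ≤
      vonNeumannEntropy (margBE ρ) + Real.logb 2 (Fintype.card A) := by
    simpa only [margBE_eq_ptraceL_s7, hρ.2, Complex.one_re, one_mul] using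
      vonNeumannEntropy_le_vonNeumannEntropy_ptraceL_add hρ.1
  have hE : vonNeumannEntropy (margE ρ) ≤
      vonNeumannEntropy (margAE ρ) + Real.logb 2 (Fintype.card A) := by
    simpa only [margE_eq_ptraceL_margAE, trace_margAE, hρ.2, Complex.one_re, one_mul] using
      vonNeumannEntropy_ptraceL_le_vonNeumannEntropy_add (posSemidef_margAE hρ.1)
  rw [condMutualInfo]
  linarith

lemma Esq_le_half_condMutualInfo {d : ℕ} {ρ : Matrix (A × B) (A × B) ℂ}
    {σ : Matrix (A × B × Fin d) (A × B × Fin d) ℂ} (hσ : IsState σ) (hext : margAB σ = ρ) :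
    Esq ρ ≤ (1 / 2) * condMutualInfo σ := by
  refine csInf_le ⟨-Real.logb 2 (Fintype.card A), ?_⟩ ⟨d, σ, hσ, hext, rfl⟩
  rintro _ ⟨_, τ, hτ, -, rfl⟩
  linarith [neg_two_mul_logb_card_le_condMutualInfo hτ]

end ConditionalEntropy

section FlaggedExtension

variable {ι X Y : Type*} [DecidableEq ι]

/-- The classical-quantum operator `∑ k, ρ k ⊗ |k⟩⟨k|`, which extends `∑ k, ρ k` by a register
recording `k`. The weights of an ensemble are absorbed into the `ρ k`. -/
def flaggedExtension (ρ : ι → Matrix (X × Y) (X × Y) ℂ) : Matrix (X × Y × ι) (X × Y × ι) ℂ :=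
  reindex (Equiv.prodAssoc X Y ι) (Equiv.prodAssoc X Y ι) (blockDiagonal ρ)

lemma flaggedExtension_apply (ρ : ι → Matrix (X × Y) (X × Y) ℂ)
    (x x' : X) (y y' : Y) (k k' : ι) :
    flaggedExtension ρ (x, y, k) (x', y', k') = if k = k' then ρ k (x, y) (x', y') else 0 :=
  blockDiagonal_apply ρ _ _

lemma margAB_flaggedExtension [Fintype ι] (ρ : ι → Matrix (X × Y) (X × Y) ℂ) :
    margAB (flaggedExtension ρ) = ∑ k, ρ k := by
  ext ⟨x, y⟩ ⟨x', y'⟩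
  simp [margAB, flaggedExtension_apply, Matrix.sum_apply]

lemma margAE_flaggedExtension [Fintype X] [Fintype Y]
    (ρ : ι → Matrix (X × Y) (X × Y) ℂ) :
    margAE (flaggedExtension ρ) = blockDiagonal fun k => ptraceR (ρ k) := by
  ext ⟨x, k⟩ ⟨x', k'⟩
  by_cases h : k = k' <;> simp [margAE, flaggedExtension_apply, blockDiagonal_apply, ptraceR, h]

lemma margBE_flaggedExtension [Fintype X] [Fintype Y]
    (ρ : ι → Matrix (X × Y) (X × Y) ℂ) :
    margBE (flaggedExtension ρ) = blockDiagonal fun k => ptraceL (ρ k) := by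
  ext ⟨y, k⟩ ⟨y', k'⟩
  by_cases h : k = k' <;> simp [margBE, flaggedExtension_apply, blockDiagonal_apply, ptraceL, h]

lemma margE_flaggedExtension [Fintype X] [Fintype Y]
    (ρ : ι → Matrix (X × Y) (X × Y) ℂ) :
    margE (flaggedExtension ρ) = diagonal fun k => (ρ k).trace := by
  ext k k'
  by_cases h : k = k' <;>
    simp [margE, flaggedExtension_apply, Matrix.trace, Fintype.sum_prod_type, h]

lemma posSemidef_flaggedExtension [Finite ι] [Finite X] [Finite Y]
    {ρ : ι → Matrix (X × Y) (X × Y) ℂ} (hρ : ∀ k, (ρ k).PosSemidef) :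
    (flaggedExtension ρ).PosSemidef :=
  (posSemidef_blockDiagonal hρ).submatrix _

variable [Fintype ι] [Fintype X] [Fintype Y]

lemma trace_flaggedExtension (ρ : ι → Matrix (X × Y) (X × Y) ℂ) :
    (flaggedExtension ρ).trace = ∑ k, (ρ k).trace := by
  rw [← trace_blockDiagonal]
  exact Equiv.sum_comp (Equiv.prodAssoc X Y ι).symm fun z => blockDiagonal ρ z z

lemma vonNeumannEntropy_flaggedExtension {ρ : ι → Matrix (X × Y) (X × Y) ℂ}
    (hρ : ∀ k, (ρ k).IsHermitian) :
    vonNeumannEntropy (flaggedExtension ρ) = ∑ k, vonNeumannEntropy (ρ k) := by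
  rw [flaggedExtension, vonNeumannEntropy_reindex _ (isHermitian_blockDiagonal_iff.2 hρ),
    vonNeumannEntropy_blockDiagonal hρ]

lemma isState_flaggedExtension {p : ι → ℝ} {ρ : ι → Matrix (X × Y) (X × Y) ℂ}
    (hp : ∀ k, 0 ≤ p k) (hp_sum : ∑ k, p k = 1) (hρ : ∀ k, IsState (ρ k)) :
    IsState (flaggedExtension fun k => (p k : ℂ) • ρ k) := by
  constructor
  · exact posSemidef_flaggedExtension fun k => (hρ k).1.smul (Complex.zero_le_real.2 (hp k))
  · simp only [trace_flaggedExtension, trace_smul, (hρ _).2, smul_eq_mul, mul_one]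
    exact_mod_cast hp_sum

/-- The quantum mutual information `I(X;Y) = S(X) + S(Y) - S(XY)`: what `condMutualInfo` becomes
when the conditioning register is a flag that selects one operator `ρ`. -/
def mutualInfo (ρ : Matrix (X × Y) (X × Y) ℂ) : ℝ :=
  vonNeumannEntropy (ptraceR ρ) + vonNeumannEntropy (ptraceL ρ) - vonNeumannEntropy ρ

lemma condMutualInfo_flaggedExtension (p : ι → ℝ) {ρ : ι → Matrix (X × Y) (X × Y) ℂ}
    (hρ : ∀ k, IsState (ρ k)) :
    condMutualInfo (flaggedExtension fun k => (p k : ℂ) • ρ k) = ∑ k, p k * mutualInfo (ρ k) := by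
  have hXY k := (hρ k).1.isHermitian
  have hX k := (posSemidef_ptraceR (hρ k).1).isHermitian
  have hY k := (posSemidef_ptraceL_s7 (hρ k).1).isHermitian
  simp only [condMutualInfo, margAE_flaggedExtension, margBE_flaggedExtension,
    margE_flaggedExtension, ptraceR_smul, ptraceL_smul, trace_smul, (hρ _).2, smul_eq_mul, mul_one,
    vonNeumannEntropy_diagonal,
    vonNeumannEntropy_flaggedExtension fun k => isHermitian_ofReal_smul (hXY k) (p k),
    vonNeumannEntropy_blockDiagonal fun k => isHermitian_ofReal_smul (hX k) (p k),
    vonNeumannEntropy_blockDiagonal fun k => isHermitian_ofReal_smul (hY k) (p k),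
    vonNeumannEntropy_smul (hXY _), vonNeumannEntropy_smul (hX _), vonNeumannEntropy_smul (hY _),
    trace_ptraceR, trace_ptraceL_s7, Complex.one_re, one_mul]
  simp only [← Finset.sum_add_distrib, ← Finset.sum_sub_distrib, mutualInfo]
  exact Finset.sum_congr rfl fun k _ => by ring

end FlaggedExtension

section PureStates

variable {ι n X Y : Type*} [Fintype ι] [Fintype n] [Fintype X] [Fintype Y]

lemma trace_outer (ψ : n → ℂ) : (outer ψ).trace = ((∑ i, ‖ψ i‖ ^ 2 : ℝ) : ℂ) := by
  simp [Matrix.trace, outer, vecMulVec_apply, Complex.mul_conj']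

lemma isState_outer {ψ : n → ℂ} (hψ : ∑ i, ‖ψ i‖ ^ 2 = 1) : IsState (outer ψ) :=
  ⟨posSemidef_vecMulVec_self_star ψ, by rw [trace_outer, hψ, Complex.ofReal_one]⟩

lemma vonNeumannEntropy_outer (ψ : n → ℂ) :
    vonNeumannEntropy (outer ψ) = negMulLogb (∑ i, ‖ψ i‖ ^ 2) := by
  have h_outer : outer ψ = replicateCol Unit ψ * (replicateCol Unit ψ)ᴴ := by
    rw [conjTranspose_replicateCol, ← vecMulVec_eq, outer]
  have h_gram : (replicateCol Unit ψ)ᴴ * replicateCol Unit ψ =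
      diagonal fun _ => ((∑ i, ‖ψ i‖ ^ 2 : ℝ) : ℂ) := by
    ext
    simp [Matrix.mul_apply, Complex.conj_mul']
  rw [h_outer, vonNeumannEntropy_mul_conjTranspose_comm, h_gram, vonNeumannEntropy_diagonal,
    Fintype.sum_unique]

lemma vonNeumannEntropy_ptraceL_outer (ψ : X × Y → ℂ) :
    vonNeumannEntropy (ptraceL (outer ψ)) = vonNeumannEntropy (ptraceR (outer ψ)) := by
  let K : Matrix X Y ℂ := of fun x y => ψ (x, y)
  have hR : ptraceR (outer ψ) = K * Kᴴ := by
    ext x x'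
    simp [K, ptraceR, outer, vecMulVec_apply, Matrix.mul_apply]
  have hL : ptraceL (outer ψ) = (Kᴴ * K)ᵀ := by
    ext y y'
    simp [K, ptraceL, outer, vecMulVec_apply, Matrix.mul_apply, mul_comm]
  rw [hL, hR, vonNeumannEntropy_transpose (isHermitian_conjTranspose_mul_self K),
    vonNeumannEntropy_mul_conjTranspose_comm]

lemma mutualInfo_outer {ψ : X × Y → ℂ} (hψ : ∑ i, ‖ψ i‖ ^ 2 = 1) :
    mutualInfo (outer ψ) = 2 * vonNeumannEntropy (ptraceR (outer ψ)) := by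
  rw [mutualInfo, vonNeumannEntropy_ptraceL_outer, vonNeumannEntropy_outer, hψ, negMulLogb_one]
  ring

/-- A finite pure-state ensemble: the unit vector `ψ k` is prepared with probability `p k`. The
state it represents is `∑ k, p k |ψ k⟩⟨ψ k|`. -/
structure IsPureStateEnsemble (p : ι → ℝ) (ψ : ι → n → ℂ) : Prop where
  nonneg : ∀ k, 0 ≤ p k
  sum_eq_one : ∑ k, p k = 1
  normalized : ∀ k, ∑ i, ‖ψ k i‖ ^ 2 = 1

lemma Esq_sum_smul_outer_le {N : ℕ} {p : Fin N → ℝ} {ψ : Fin N → X × Y → ℂ}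
    (h : IsPureStateEnsemble p ψ) :
    Esq (∑ k, (p k : ℂ) • outer (ψ k)) ≤
      ∑ k, p k * vonNeumannEntropy (ptraceR (outer (ψ k))) := by
  have hψ k := isState_outer (h.normalized k)
  calc Esq (∑ k, (p k : ℂ) • outer (ψ k))
      ≤ (1 / 2) * condMutualInfo (flaggedExtension fun k => (p k : ℂ) • outer (ψ k)) :=
        Esq_le_half_condMutualInfo (isState_flaggedExtension h.nonneg h.sum_eq_one hψ)
          (margAB_flaggedExtension _)
    _ = ∑ k, p k * vonNeumannEntropy (ptraceR (outer (ψ k))) := by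
        rw [condMutualInfo_flaggedExtension p hψ, Finset.mul_sum]
        refine Finset.sum_congr rfl fun k _ => ?_
        rw [mutualInfo_outer (h.normalized k)]
        ring

lemma sum_eigenvalues_smul_outer {ρ : Matrix n n ℂ} [DecidableEq n] (hρ : ρ.IsHermitian) :
    ∑ i, (hρ.eigenvalues i : ℂ) • outer (hρ.eigenvectorBasis i) = ρ := by
  conv_rhs => rw [hρ.spectral_theorem, Unitary.conjStarAlgAut_apply]
  ext i j
  rw [Matrix.mul_apply, Matrix.sum_apply]
  refine Finset.sum_congr rfl fun k _ => ?_
  simp only [outer, Matrix.smul_apply, vecMulVec_apply, Pi.star_apply, smul_eq_mul, mul_diagonal,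
    star_apply, IsHermitian.eigenvectorUnitary_apply, Function.comp_apply, Complex.coe_algebraMap]
  ring

lemma isPureStateEnsemble_eigenvectorBasis {ρ : Matrix n n ℂ} [DecidableEq n] (hρ : IsState ρ) :
    IsPureStateEnsemble hρ.1.isHermitian.eigenvalues
      fun i => ⇑(hρ.1.isHermitian.eigenvectorBasis i) where
  nonneg := hρ.1.eigenvalues_nonneg
  sum_eq_one := by rw [← trace_re_eq_sum_eigenvalues, hρ.2, Complex.one_re]
  normalized i := by
    rw [← EuclideanSpace.norm_sq_eq, OrthonormalBasis.norm_eq_one, one_pow]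

lemma exists_isPureStateEnsemble {ρ : Matrix n n ℂ} (hρ : IsState ρ) :
    ∃ (N : ℕ) (p : Fin N → ℝ) (ψ : Fin N → n → ℂ),
      IsPureStateEnsemble p ψ ∧ ∑ k, (p k : ℂ) • outer (ψ k) = ρ := by
  have h := isPureStateEnsemble_eigenvectorBasis hρ
  set hH := hρ.1.isHermitian
  let e := (Fintype.equivFin n).symm
  refine ⟨Fintype.card n, fun k => hH.eigenvalues (e k), fun k => ⇑(hH.eigenvectorBasis (e k)),
    ⟨fun k => h.nonneg (e k), ?_, fun k => h.normalized (e k)⟩, ?_⟩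
  · exact (Equiv.sum_comp e hH.eigenvalues).trans h.sum_eq_one
  · exact (Equiv.sum_comp e fun i => (hH.eigenvalues i : ℂ) • outer (hH.eigenvectorBasis i)).trans
      (sum_eigenvalues_smul_outer hH)

end PureStates

/-- Squashed entanglement is upper bounded by entanglement of formation:
for every pure-state ensemble for `ρ^{AB}`, `E_sq(ρ^{AB})` is at most the average
entanglement entropy of the ensemble; consequently `E_sq(ρ^{AB}) ≤ E_F(ρ^{AB})`. -/
theorem squashedEntanglement_le_entanglementOfFormation
    {A B : Type*} [Fintype A] [Fintype B]
    (ρ : Matrix (A × B) (A × B) ℂ) (hρ : IsState ρ) :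
    (∀ (n : ℕ) (p : Fin n → ℝ) (ψ : Fin n → A × B → ℂ),
        (∀ k, 0 ≤ p k) → (∑ k, p k) = 1 → (∀ k, ∑ i, ‖ψ k i‖ ^ 2 = 1) →
        (∑ k, (p k : ℂ) • outer (ψ k)) = ρ →
        Esq ρ ≤ ∑ k, p k * vonNeumannEntropy (ptraceR (outer (ψ k)))) ∧
    Esq ρ ≤ EoF ρ := by
  have Esq_le (n : ℕ) (p : Fin n → ℝ) (ψ : Fin n → A × B → ℂ) (hp : ∀ k, 0 ≤ p k)
      (hp_sum : ∑ k, p k = 1) (hψ : ∀ k, ∑ i, ‖ψ k i‖ ^ 2 = 1)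
      (hsum : ∑ k, (p k : ℂ) • outer (ψ k) = ρ) :
      Esq ρ ≤ ∑ k, p k * vonNeumannEntropy (ptraceR (outer (ψ k))) :=
    hsum ▸ Esq_sum_smul_outer_le ⟨hp, hp_sum, hψ⟩
  refine ⟨Esq_le, le_csInf ?_ ?_⟩
  · obtain ⟨n, p, ψ, h, hsum⟩ := exists_isPureStateEnsemble hρ
    exact ⟨_, n, p, ψ, h.nonneg, h.sum_eq_one, h.normalized, hsum, rfl⟩
  · rintro _ ⟨n, p, ψ, hp, hp_sum, hψ, hsum, rfl⟩
    exact Esq_le n p ψ hp hp_sum hψ hsum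

end
end
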